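/- Fix θ ∈ Θ_M°. As |x| → ∞ the first-order parameter derivatives of the stable density satisfy: f_σ(x;θ) = O(|x|^{−(1+α)}), f_α(x;θ) = O(|x|^{−(1+α)} log|x|), f_β(x;θ) = O(|x|^{−(1+α)}), and their x-derivatives satisfy f_σ'(x;θ) = −f_{μσ}(x;θ) = O(|x|^{−(2+α)}), f_α'(x;θ) = −f_{μα}(x;θ) = O(|x|^{−(2+α)} log|x|), f_β'(x;θ) = −f_{μβ}(x;θ) = O(|x|^{−(2+α)}). -/

import Mathlib

open MeasureTheory Filter

noncomputable section

def ThetaInt : Set (Fin 4 → ℝ) :=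
  {θ | 0 < θ 1 ∧ θ 2 ∈ Set.Ioo (0:ℝ) 2 ∧ θ 3 ∈ Set.Ioo (-1:ℝ) 1}

/-- Cumulant (log characteristic function) of the continuous (M₀) parameterization,
with `θ = (μ, σ, α, β)`. -/
def psiM (θ : Fin 4 → ℝ) (t : ℝ) : ℂ :=
  if θ 2 = 1 then
    ((-(|θ 1 * t|) : ℝ) : ℂ)
      - Complex.I * (((2 * θ 3 / Real.pi) * (θ 1 * t) * Real.log |θ 1 * t| : ℝ) : ℂ)
      + Complex.I * ((θ 0 * t : ℝ) : ℂ)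
  else
    ((-(|θ 1 * t| ^ (θ 2)) : ℝ) : ℂ) *
        (1 + Complex.I * ((θ 3 * Real.sign t * Real.tan (Real.pi * θ 2 / 2)
            * (|θ 1 * t| ^ (1 - θ 2) - 1) : ℝ) : ℂ))
      + Complex.I * ((θ 0 * t : ℝ) : ℂ)

/-- Characteristic function of the (M₀) parameterization. -/
def phiM (θ : Fin 4 → ℝ) (t : ℝ) : ℂ := Complex.exp (psiM θ t)

/-- Stable density in the (M₀) parameterization, via Fourier inversion. -/
def fM (θ : Fin 4 → ℝ) (x : ℝ) : ℝ :=
  (1 / (2 * Real.pi)) *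
    (∫ t : ℝ, Complex.exp (-Complex.I * (t : ℂ) * (x : ℂ)) * phiM θ t).re

/-- Partial derivative of the density in parameter `i`. -/
def fP (i : Fin 4) (θ : Fin 4 → ℝ) (x : ℝ) : ℝ :=
  deriv (fun s => fM (Function.update θ i s) x) (θ i)

/-- Second partial derivative of the density in parameters `i`, `j`. -/
def fPP (i j : Fin 4) (θ : Fin 4 → ℝ) (x : ℝ) : ℝ :=
  deriv (fun s => fP i (Function.update θ j s) x) (θ j)

/-- Derivative of the density in `x`. -/
def fX (θ : Fin 4 → ℝ) (x : ℝ) : ℝ := deriv (fun y => fM θ y) x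

/-- Mixed derivative `∂²f/∂x∂θᵢ`. -/
def fPX (i : Fin 4) (θ : Fin 4 → ℝ) (x : ℝ) : ℝ := deriv (fun y => fP i θ y) x

/-- Score functions. -/
def ellP (i : Fin 4) (θ : Fin 4 → ℝ) (x : ℝ) : ℝ := fP i θ x / fM θ x

/-- Derivative of the score in `x`. -/
def ellPX (i : Fin 4) (θ : Fin 4 → ℝ) (x : ℝ) : ℝ := deriv (fun y => ellP i θ y) x

/-- Derivative of the score `ℓ_{θᵢ}` in the parameter `θⱼ`. -/
def ellPP (i j : Fin 4) (θ : Fin 4 → ℝ) (x : ℝ) : ℝ :=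
  deriv (fun s => ellP i (Function.update θ j s) x) (θ j)

/-- `h = O(r)` as `|x| → ∞`. -/
def IsBigOAtInfty (h r : ℝ → ℝ) : Prop :=
  ∃ c > 0, ∃ M > 0, ∀ x : ℝ, M ≤ |x| → |h x| ≤ c * r x


end

noncomputable section

def EE (z : ℂ) : ℂ := dslope Complex.exp 0 z

theorem EE_diff : Differentiable ℂ EE := by
  rw [← differentiableOn_univ]
  exact (Complex.differentiableOn_dslope Filter.univ_mem).2 Complex.differentiable_exp.differentiableOn

theorem EE_zero : EE 0 = 1 := by simp [EE]

theorem EE_mul (z : ℂ) : z * EE z = Complex.exp z - 1 := by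
  by_cases h : z = 0
  · simp [h]
  · rw [EE, dslope_of_ne _ h, slope_def_field]; field_simp; simp

theorem EE_deriv (z : ℂ) : EE z + z * deriv EE z = Complex.exp z := by
  have h1 : HasDerivAt (fun z => z * EE z) (1 * EE z + z * deriv EE z) z :=
    (hasDerivAt_id z).mul (EE_diff z).hasDerivAt
  have h2 : HasDerivAt (fun z => z * EE z) (Complex.exp z) z := by
    have : (fun z => z * EE z) = fun z => Complex.exp z - 1 := funext EE_mul
    rw [this]
    exact (Complex.hasDerivAt_exp z).sub_const 1
  simpa using h1.unique h2

theorem EE_bound (z : ℂ) : ‖EE z‖ ≤ 1 + Real.exp z.re := by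
  by_cases h : z = 0
  · rw [h, EE_zero]; simp
  have hz : 0 < ‖z‖ := norm_pos_iff.2 h
  have key : ‖Complex.exp z - Complex.exp 0‖ ≤ (1 + Real.exp z.re) * ‖z - 0‖ := by
    refine (convex_segment (0:ℂ) z).norm_image_sub_le_of_norm_hasDerivWithin_le
      (f := Complex.exp) (f' := Complex.exp)
      (fun x _ => (Complex.hasDerivAt_exp x).hasDerivWithinAt) ?_
      (left_mem_segment ℝ _ _) (right_mem_segment ℝ _ _)
    intro x hx
    rw [segment_eq_image] at hx
    obtain ⟨t, ⟨h0, h1⟩, rfl⟩ := hx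
    rw [Complex.norm_exp]
    simp only [smul_zero, zero_add, Complex.real_smul, Complex.mul_re, Complex.ofReal_re,
      Complex.ofReal_im, zero_mul, sub_zero]
    rcases le_total z.re 0 with hr | hr
    · have : Real.exp (t * z.re) ≤ 1 := Real.exp_le_one_iff.2 (mul_nonpos_of_nonneg_of_nonpos h0 hr)
      linarith [Real.exp_pos z.re]
    · have : Real.exp (t * z.re) ≤ Real.exp z.re := Real.exp_le_exp.2 (by nlinarith)
      linarith
  rw [Complex.exp_zero, ← EE_mul, norm_mul, sub_zero] at key
  nlinarith

theorem dEE_bound (z : ℂ) : ‖deriv EE z‖ ≤ 3 * (1 + Real.exp z.re) := by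
  have := Complex.norm_deriv_le_of_forall_mem_sphere_norm_le (f := EE) (c := z) (R := 1)
    (C := 3 * (1 + Real.exp z.re)) one_pos EE_diff.diffContOnCl ?_
  · simpa using this
  · intro w hw
    refine (EE_bound w).trans ?_
    have h1 : w.re ≤ z.re + 1 := by
      have := (Complex.abs_re_le_norm (w - z))
      rw [mem_sphere_iff_norm.1 hw] at this
      have := (abs_le.1 this).2
      simp at this; linarith
    have h2 : Real.exp w.re ≤ Real.exp z.re * 3 := by
      refine (Real.exp_le_exp.2 h1).trans ?_
      rw [Real.exp_add]
      have := Real.exp_one_lt_d9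
      have := Real.exp_pos z.re
      nlinarith
    linarith

theorem EE_real (x : ℝ) : (EE x).im = 0 := by
  by_cases h : x = 0
  · rw [h]; simp [EE_zero]
  · have := EE_mul x
    have h2 : (x : ℂ) * EE x = ((Real.exp x - 1 : ℝ) : ℂ) := by rw [this]; push_cast; rfl
    have h3 := congrArg Complex.im h2
    simp only [Complex.mul_im, Complex.ofReal_re, Complex.ofReal_im, zero_mul, add_zero] at h3
    rcases mul_eq_zero.1 h3 with h4 | h4
    · exact absurd h4 h
    · exact h4

def sinq (e : ℝ) : ℝ := (EE (Complex.I * (Real.pi * e / 2 : ℝ))).re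
def rho (e : ℝ) : ℝ := (2 / Real.pi) / sinq e
def tau (e : ℝ) : ℝ := Real.tan (Real.pi * e / 4)

theorem sinq_mul (e : ℝ) : (Real.pi * e / 2) * sinq e = Real.sin (Real.pi * e / 2) := by
  have h := EE_mul (Complex.I * (Real.pi * e / 2 : ℝ))
  rw [mul_comm Complex.I, Complex.exp_mul_I] at h
  have h3 := congrArg Complex.im h
  rw [← Complex.ofReal_cos, ← Complex.ofReal_sin] at h3
  rw [sinq, mul_comm Complex.I]
  simpa [-Complex.ofReal_div, -Complex.ofReal_mul, -Complex.ofReal_cos, -Complex.ofReal_sin] using h3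

theorem sinq_contDiff : ContDiff ℝ 2 sinq := by
  have h1 : ContDiff ℝ 2 EE := (EE_diff.contDiff (n := 2)).restrict_scalars ℝ
  unfold sinq
  refine Complex.reCLM.contDiff.comp (h1.comp ?_)
  refine contDiff_const.mul (Complex.ofRealCLM.contDiff.comp ?_)
  exact (contDiff_const.mul contDiff_id).div_const 2

theorem sinq_pos {e : ℝ} (h : e ∈ Set.Ioo (-1:ℝ) 1) : 0 < sinq e := by
  have hp := Real.pi_pos
  have hm := sinq_mul e
  rcases lt_trichotomy e 0 with h0 | h0 | h0
  · have h1 : Real.sin (Real.pi * e / 2) < 0 :=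
      Real.sin_neg_of_neg_of_neg_pi_lt (by nlinarith) (by nlinarith [h.1])
    rw [← hm] at h1
    have : Real.pi * e / 2 < 0 := by nlinarith
    exact pos_of_mul_neg_right h1 this.le
  · rw [h0, sinq]; simp [EE_zero]
  · have h1 : 0 < Real.sin (Real.pi * e / 2) :=
      Real.sin_pos_of_pos_of_lt_pi (by positivity) (by nlinarith [h.2])
    rw [← hm] at h1
    have : 0 < Real.pi * e / 2 := by positivity
    exact pos_of_mul_pos_right h1 this.le

theorem rho_contDiffOn : ContDiffOn ℝ 2 rho (Set.Ioo (-1) 1) := by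
  unfold rho
  exact contDiffOn_const.div sinq_contDiff.contDiffOn (fun x hx => (sinq_pos hx).ne')

theorem tau_contDiffOn : ContDiffOn ℝ 2 tau (Set.Ioo (-1) 1) := by
  intro x hx
  have hp := Real.pi_pos
  have : Real.cos (Real.pi * x / 4) ≠ 0 :=
    (Real.cos_pos_of_mem_Ioo ⟨by nlinarith [hx.1], by nlinarith [hx.2]⟩).ne'
  unfold tau
  refine ContDiffAt.contDiffWithinAt ?_
  exact (Real.contDiffAt_tan.2 this).comp x (f := fun e => Real.pi * e / 4) (by fun_prop)

theorem smooth_aux {f : ℝ → ℝ} (hf : ContDiffOn ℝ 2 f (Set.Ioo (-1) 1)) {e : ℝ}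
    (h : e ∈ Set.Ioo (-1:ℝ) 1) :
    HasDerivAt f (deriv f e) e ∧ ContinuousAt f e ∧ ContinuousAt (deriv f) e := by
  have h1 : ContDiffAt ℝ 2 f e := hf.contDiffAt (isOpen_Ioo.mem_nhds h)
  refine ⟨(h1.differentiableAt (by norm_num)).hasDerivAt, h1.continuousAt, ?_⟩
  have := hf.continuousOn_deriv_of_isOpen isOpen_Ioo (by norm_num)
  exact this.continuousAt (isOpen_Ioo.mem_nhds h)

theorem rho_spec {e : ℝ} (h : e ≠ 0) :
    rho e = e / Real.sin (Real.pi * e / 2) := by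
  have hp := Real.pi_pos
  rw [rho, ← sinq_mul]
  field_simp

theorem tau_spec {e : ℝ} (h : e ∈ Set.Ioo (-1:ℝ) 1) (h0 : e ≠ 0) :
    tau e = (1 - Real.cos (Real.pi * e / 2)) / Real.sin (Real.pi * e / 2) := by
  have hp := Real.pi_pos
  have hc : Real.cos (Real.pi * e / 4) ≠ 0 :=
    (Real.cos_pos_of_mem_Ioo ⟨by nlinarith [h.1], by nlinarith [h.2]⟩).ne'
  have hs : Real.sin (Real.pi * e / 2) ≠ 0 := by
    rw [← sinq_mul]
    exact mul_ne_zero (by positivity) (sinq_pos h).ne'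
  have e2 : Real.pi * e / 2 = 2 * (Real.pi * e / 4) := by ring
  rw [e2, Real.sin_two_mul] at hs
  rw [tau, Real.tan_eq_sin_div_cos, e2, Real.sin_two_mul, Real.cos_two_mul, div_eq_div_iff hc hs]
  have := Real.sin_sq_add_cos_sq (Real.pi * e / 4)
  linear_combination (2 * Real.cos (Real.pi * e / 4)) * this

theorem rho_zero : rho 0 = 2 / Real.pi := by simp [rho, sinq, EE_zero]
theorem tau_zero : tau 0 = 0 := by simp [tau]
end

noncomputable section
open Complex (I)

def LL (s : ℝ) (v : ℂ) : ℂ := (Real.log s : ℂ) + Complex.log v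
def ex (θ : Fin 4 → ℝ) (v : ℂ) : ℂ := Complex.exp (((θ 2 - 1 : ℝ) : ℂ) * LL (θ 1) v)
def ee (θ : Fin 4 → ℝ) (v : ℂ) : ℂ := EE (((θ 2 - 1 : ℝ) : ℂ) * LL (θ 1) v)
def de (θ : Fin 4 → ℝ) (v : ℂ) : ℂ := deriv EE (((θ 2 - 1 : ℝ) : ℂ) * LL (θ 1) v)
def rot (a : ℝ) : ℂ := I * Complex.exp (((a - 1 : ℝ) : ℂ) * (-(I * Real.pi / 2)))

def AA (θ : Fin 4 → ℝ) (v : ℂ) : ℂ :=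
  (θ 0 : ℂ) * v - (θ 3 : ℂ) * ((θ 1 : ℂ) * v) *
    ((rho (θ 2 - 1) : ℂ) * (LL (θ 1) v * ee θ v) + (tau (θ 2 - 1) : ℂ))
def BB (θ : Fin 4 → ℝ) (v : ℂ) : ℂ :=
  ((1 + θ 3 : ℝ) : ℂ) * rot (θ 2) * ((θ 1 : ℂ) * v * ex θ v)

def dA (i : Fin 4) (θ : Fin 4 → ℝ) (v : ℂ) : ℂ :=
  (![v,
    -(θ 3 : ℂ) * v * ((rho (θ 2 - 1) : ℂ) * (LL (θ 1) v * ee θ v + ex θ v) + (tau (θ 2 - 1) : ℂ)),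
    -(θ 3 : ℂ) * ((θ 1 : ℂ) * v) * (((deriv rho (θ 2 - 1) : ℝ) : ℂ) * (LL (θ 1) v * ee θ v)
      + (rho (θ 2 - 1) : ℂ) * (LL (θ 1) v ^ 2 * de θ v) + ((deriv tau (θ 2 - 1) : ℝ) : ℂ)),
    -((θ 1 : ℂ) * v) * ((rho (θ 2 - 1) : ℂ) * (LL (θ 1) v * ee θ v) + (tau (θ 2 - 1) : ℂ))] :
    Fin 4 → ℂ) i

def dB (i : Fin 4) (θ : Fin 4 → ℝ) (v : ℂ) : ℂ :=
  (![0,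
    ((1 + θ 3 : ℝ) : ℂ) * rot (θ 2) * ((θ 2 : ℂ) * v * ex θ v),
    ((1 + θ 3 : ℝ) : ℂ) * rot (θ 2) * ((θ 1 : ℂ) * v * ex θ v) *
      (LL (θ 1) v + (-(I * Real.pi / 2))),
    rot (θ 2) * ((θ 1 : ℂ) * v * ex θ v)] : Fin 4 → ℂ) i

theorem upd_self (θ : Fin 4 → ℝ) (i : Fin 4) (s : ℝ) : Function.update θ i s i = s := by simp

theorem LL_deriv {s : ℝ} (hs : 0 < s) (v : ℂ) :
    HasDerivAt (fun s => LL s v) ((s : ℂ)⁻¹) s := by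
  unfold LL
  have := (Real.hasDerivAt_log hs.ne').ofReal_comp
  simpa using this.add_const (Complex.log v)

theorem lin_deriv (a : ℝ) : HasDerivAt (fun s : ℝ => ((s - 1 : ℝ) : ℂ)) 1 a := by
  simpa using ((hasDerivAt_id a).sub_const 1).ofReal_comp

theorem AA_deriv (i : Fin 4) {θ : Fin 4 → ℝ} (h1 : 0 < θ 1) (h2 : θ 2 ∈ Set.Ioo (0:ℝ) 2) (v : ℂ) :
    HasDerivAt (fun s => AA (Function.update θ i s) v) (dA i θ v) (θ i) := by
  have he : θ 2 - 1 ∈ Set.Ioo (-1:ℝ) 1 := ⟨by linarith [h2.1], by linarith [h2.2]⟩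
  have hs : (θ 1 : ℂ) ≠ 0 := by exact_mod_cast h1.ne'
  fin_cases i
  · simp only [AA, dA, ee]
    simpa using (((hasDerivAt_id (θ 0)).ofReal_comp).mul_const v).sub_const
      ((θ 3 : ℂ) * ((θ 1 : ℂ) * v) *
    ((rho (θ 2 - 1) : ℂ) * (LL (θ 1) v * ee θ v) + (tau (θ 2 - 1) : ℂ)))
  · simp only [AA, dA, ee]
    have hL := LL_deriv h1 v
    have hE : HasDerivAt (fun s => EE (((θ 2 - 1 : ℝ) : ℂ) * LL s v)) _ (θ 1) :=
      HasDerivAt.comp (θ 1) (h₂ := EE) (EE_diff _).hasDerivAt (hL.const_mul ((θ 2 - 1 : ℝ) : ℂ))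
    have key := EE_deriv (((θ 2 - 1 : ℝ) : ℂ) * LL (θ 1) v)
    have h3 := (((((hasDerivAt_id (θ 1)).ofReal_comp).mul_const v).const_mul (θ 3 : ℂ)).mul
      (((hL.mul hE).const_mul (rho (θ 2 - 1) : ℂ)).add_const (tau (θ 2 - 1) : ℂ))).const_sub
        ((θ 0 : ℂ) * v)
    simp [-Complex.ofReal_sub]
    refine HasDerivAt.congr_deriv h3 ?_
    simp only [id, Pi.mul_apply, ex, ← key]
    simp only [Complex.ofReal_one]
    field_simp
    ring
  · simp only [AA, dA, ee]
    have hE : HasDerivAt (fun a : ℝ => EE (((a - 1 : ℝ) : ℂ) * LL (θ 1) v)) _ (θ 2) :=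
      HasDerivAt.comp (θ 2) (h₂ := EE) (EE_diff _).hasDerivAt ((lin_deriv (θ 2)).mul_const (LL (θ 1) v))
    have hr : HasDerivAt (fun a : ℝ => ((rho (a - 1) : ℝ) : ℂ)) _ (θ 2) :=
      (HasDerivAt.comp_sub_const (θ 2) 1 (smooth_aux rho_contDiffOn he).1).ofReal_comp
    have ht : HasDerivAt (fun a : ℝ => ((tau (a - 1) : ℝ) : ℂ)) _ (θ 2) :=
      (HasDerivAt.comp_sub_const (θ 2) 1 (smooth_aux tau_contDiffOn he).1).ofReal_comp
    have h3 := (((hr.mul (hE.const_mul (LL (θ 1) v))).add ht).const_mul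
      ((θ 3 : ℂ) * ((θ 1 : ℂ) * v))).const_sub ((θ 0 : ℂ) * v)
    simp [-Complex.ofReal_sub]
    refine HasDerivAt.congr_deriv h3 ?_
    simp only [de, ee]
    ring
  · simp only [AA, dA, ee]
    simp [-Complex.ofReal_sub]
    have h3 := ((((hasDerivAt_id (θ 3)).ofReal_comp).mul_const ((θ 1 : ℂ) * v)).mul_const
      ((rho (θ 2 - 1) : ℂ) * (LL (θ 1) v * EE (((θ 2 - 1 : ℝ) : ℂ) * LL (θ 1) v))
        + (tau (θ 2 - 1) : ℂ))).const_sub ((θ 0 : ℂ) * v)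
    refine HasDerivAt.congr_deriv h3 ?_
    push_cast
    ring

theorem BB_deriv (i : Fin 4) {θ : Fin 4 → ℝ} (h1 : 0 < θ 1) (v : ℂ) :
    HasDerivAt (fun s => BB (Function.update θ i s) v) (dB i θ v) (θ i) := by
  have hs : (θ 1 : ℂ) ≠ 0 := by exact_mod_cast h1.ne'
  fin_cases i
  · simp only [BB, dB, ex]
    simpa using hasDerivAt_const (θ 0) (((1 + θ 3 : ℝ) : ℂ) * rot (θ 2) * ((θ 1 : ℂ) * v * Complex.exp (((θ 2 - 1 : ℝ) : ℂ) * LL (θ 1) v)))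
  · simp only [BB, dB, ex]
    have hL := LL_deriv h1 v
    have h3 := ((((hasDerivAt_id (θ 1)).ofReal_comp).mul_const v).mul
      (hL.const_mul ((θ 2 - 1 : ℝ) : ℂ)).cexp).const_mul (((1 + θ 3 : ℝ) : ℂ) * rot (θ 2))
    simp [-Complex.ofReal_sub, -Complex.ofReal_add]
    refine HasDerivAt.congr_deriv h3 ?_
    simp only [id]
    push_cast
    field_simp
    ring
  · simp only [BB, dB, ex, rot]
    have h3 := ((((lin_deriv (θ 2)).mul_const (-(I * Real.pi / 2))).cexp.const_mul I).const_mul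
       (((1 + θ 3 : ℝ) : ℂ))).mul
      (((lin_deriv (θ 2)).mul_const (LL (θ 1) v)).cexp.const_mul ((θ 1 : ℂ) * v))
    simp [-Complex.ofReal_sub, -Complex.ofReal_add]
    simp [-Complex.ofReal_sub, -Complex.ofReal_add] at h3
    refine HasDerivAt.congr_deriv h3 ?_
    ring
  · simp only [BB, dB, ex]
    simp [-Complex.ofReal_sub, -Complex.ofReal_add]
    have h3 := ((((hasDerivAt_id (θ 3)).const_add 1).ofReal_comp).mul_const (rot (θ 2))).mul_const
      ((θ 1 : ℂ) * v * ex θ v)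
    refine HasDerivAt.congr_deriv h3 ?_
    simp [ex]

theorem psi_link {θ : Fin 4 → ℝ} (h1 : 0 < θ 1) (h2 : θ 2 ∈ Set.Ioo (0:ℝ) 2) {t : ℝ} (ht : 0 < t) :
    psiM θ t = AA θ (t * I) + BB θ (t * I) := by
  have hp := Real.pi_pos
  have hL : LL (θ 1) (t * I) = ((Real.log (θ 1 * t) : ℝ) : ℂ) + Real.pi / 2 * I := by
    rw [LL, Complex.log_ofReal_mul ht Complex.I_ne_zero, Complex.log_I, Real.log_mul h1.ne' ht.ne']
    push_cast; ring
  have hu : 0 < θ 1 * t := mul_pos h1 ht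
  by_cases h : θ 2 = 1
  · rw [psiM, if_pos h, AA, BB, ee, ex, rot, hL, h, abs_of_pos hu]
    simp only [sub_self, Complex.ofReal_zero, zero_mul, EE_zero, rho_zero, tau_zero,
      Complex.exp_zero, mul_one, add_zero]
    have hpc : (Real.pi : ℂ) ≠ 0 := by exact_mod_cast hp.ne'
    push_cast
    field_simp
    ring_nf
    rw [Complex.I_sq]; ring
  · have he : θ 2 - 1 ∈ Set.Ioo (-1:ℝ) 1 := ⟨by linarith [h2.1], by linarith [h2.2]⟩
    have he0 : θ 2 - 1 ≠ 0 := sub_ne_zero.2 h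
    have hsin : Real.sin (Real.pi * (θ 2 - 1) / 2) ≠ 0 := by
      rw [← sinq_mul]
      refine mul_ne_zero ?_ (sinq_pos he).ne'
      exact div_ne_zero (mul_ne_zero hp.ne' he0) two_ne_zero
    have htan : Real.tan (Real.pi * θ 2 / 2) =
        -(Real.cos (Real.pi * (θ 2 - 1) / 2) / Real.sin (Real.pi * (θ 2 - 1) / 2)) := by
      have : Real.pi * θ 2 / 2 = Real.pi * (θ 2 - 1) / 2 + Real.pi / 2 := by ring
      rw [this, Real.tan_eq_sin_div_cos, Real.sin_add_pi_div_two, Real.cos_add_pi_div_two, div_neg]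
    have hmul : LL (θ 1) (t * I) * ee θ (t * I) = (ex θ (t * I) - 1) / ((θ 2 - 1 : ℝ) : ℂ) := by
      have h0 : ((θ 2 - 1 : ℝ) : ℂ) ≠ 0 := by exact_mod_cast he0
      rw [eq_div_iff h0, ee, ex, ← EE_mul]; ring
    have hpow : (θ 1 * t) ^ (θ 2) = (θ 1 * t) * Real.exp ((θ 2 - 1) * Real.log (θ 1 * t)) := by
      rw [mul_comm (θ 2 - 1), ← Real.rpow_def_of_pos hu, ← Real.rpow_one_add' hu.le (by linarith [h2.1])]
      congr 1; ring
    have hpow2 : (θ 1 * t) ^ (1 - θ 2) = (Real.exp ((θ 2 - 1) * Real.log (θ 1 * t)))⁻¹ := by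
      rw [← Real.exp_neg, Real.rpow_def_of_pos hu]; congr 1; ring
    have hexp : ex θ (t * I) = (Real.exp ((θ 2 - 1) * Real.log (θ 1 * t)) : ℂ) *
        ((Real.cos (Real.pi * (θ 2 - 1) / 2) : ℂ) + (Real.sin (Real.pi * (θ 2 - 1) / 2) : ℂ) * I) := by
      rw [ex, hL, Complex.ofReal_exp, Complex.ofReal_cos, Complex.ofReal_sin, ← Complex.exp_mul_I,
        ← Complex.exp_add]
      congr 1; push_cast; ring
    have hrot : rot (θ 2) = I * ((Real.cos (Real.pi * (θ 2 - 1) / 2) : ℂ) -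
        (Real.sin (Real.pi * (θ 2 - 1) / 2) : ℂ) * I) := by
      rw [rot]
      have : ((θ 2 - 1 : ℝ) : ℂ) * (-(I * Real.pi / 2)) = ((-(Real.pi * (θ 2 - 1) / 2) : ℝ) : ℂ) * I := by
        push_cast; ring
      rw [this, Complex.exp_mul_I, ← Complex.ofReal_cos, ← Complex.ofReal_sin, Real.cos_neg, Real.sin_neg]
      push_cast; ring
    rw [psiM, if_neg h, AA, BB, hmul, hexp, hrot, rho_spec he0, tau_spec he he0, htan,
      abs_of_pos hu, hpow, hpow2, Real.sign_of_pos ht]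
    have hq := Real.sin_sq_add_cos_sq (Real.pi * (θ 2 - 1) / 2)
    have hx0 := (Real.exp_pos ((θ 2 - 1) * Real.log (θ 1 * t))).ne'
    generalize Real.exp ((θ 2 - 1) * Real.log (θ 1 * t)) = X at *
    generalize Real.cos (Real.pi * (θ 2 - 1) / 2) = c at *
    generalize Real.sin (Real.pi * (θ 2 - 1) / 2) = s at *
    have hsC : (s : ℂ) ≠ 0 := by exact_mod_cast hsin
    have hxC : (X : ℂ) ≠ 0 := by exact_mod_cast hx0
    have heC : (θ 2 : ℂ) - 1 ≠ 0 := by exact_mod_cast he0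
    have hqC : (s : ℂ)^2 + c^2 = 1 := by exact_mod_cast hq
    push_cast
    field_simp
    have hc2 : (c:ℂ)^2 = 1 - s^2 := by linear_combination hqC
    ring_nf
    simp only [Complex.I_sq, hc2]
    ring_nf
    simp only [Complex.I_pow_four]
    ring_nf
end

noncomputable section
open Complex (I)
open Filter Topology

structure Bd (K : ℝ) (θ : Fin 4 → ℝ) : Prop where
  one : 1 ≤ K
  b0 : ‖(θ 0 : ℂ)‖ ≤ K
  b1 : ‖(θ 1 : ℂ)‖ ≤ K
  b2 : ‖(θ 2 : ℂ)‖ ≤ K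
  b3 : ‖(θ 3 : ℂ)‖ ≤ K
  b4 : ‖((1 + θ 3 : ℝ) : ℂ)‖ ≤ K
  r0 : ‖(rho (θ 2 - 1) : ℂ)‖ ≤ K
  r1 : ‖((deriv rho (θ 2 - 1) : ℝ) : ℂ)‖ ≤ K
  t0 : ‖(tau (θ 2 - 1) : ℂ)‖ ≤ K
  t1 : ‖((deriv tau (θ 2 - 1) : ℝ) : ℂ)‖ ≤ K
  l0 : ‖(Real.log (θ 1) : ℂ)‖ ≤ K
  e0 : Real.exp ((θ 2 - 1) * Real.log (θ 1)) ≤ K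
  ro : ‖rot (θ 2)‖ ≤ K

theorem ev_le {X : Type*} [TopologicalSpace X] {f : X → ℝ} {x : X} (h : ContinuousAt f x) :
    ∃ K, ∀ᶠ y in 𝓝 x, f y ≤ K :=
  ⟨f x + 1, (h.eventually (gt_mem_nhds (lt_add_one (f x)))).mono fun _ h => le_of_lt h⟩

theorem Bd_ev {θ₀ : Fin 4 → ℝ} (h1 : 0 < θ₀ 1) (h2 : θ₀ 2 ∈ Set.Ioo (0:ℝ) 2) :
    ∃ K, ∀ᶠ θ in 𝓝 θ₀, Bd K θ := by
  have he : θ₀ 2 - 1 ∈ Set.Ioo (-1:ℝ) 1 := ⟨by linarith [h2.1], by linarith [h2.2]⟩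
  have hc (i : Fin 4) : ContinuousAt (fun θ : Fin 4 → ℝ => θ i) θ₀ := (continuous_apply i).continuousAt
  have hc2 : ContinuousAt (fun θ : Fin 4 → ℝ => θ 2 - 1) θ₀ := (hc 2).sub continuousAt_const
  have cc {f : ℝ → ℝ} (hf : ContinuousAt f (θ₀ 2 - 1)) :
      ContinuousAt (fun θ : Fin 4 → ℝ => ‖((f (θ 2 - 1) : ℝ) : ℂ)‖) θ₀ :=
    (Complex.continuous_ofReal.continuousAt.comp
      (ContinuousAt.comp (f := fun θ : Fin 4 → ℝ => θ 2 - 1) hf hc2)).norm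
  have ci (i : Fin 4) : ContinuousAt (fun θ : Fin 4 → ℝ => ‖(θ i : ℂ)‖) θ₀ :=
    (Complex.continuous_ofReal.continuousAt.comp (hc i)).norm
  have hlog : ContinuousAt (fun θ : Fin 4 → ℝ => Real.log (θ 1)) θ₀ := (hc 1).log h1.ne'
  obtain ⟨k0, h0⟩ := ev_le (ci 0)
  obtain ⟨k1, h1'⟩ := ev_le (ci 1)
  obtain ⟨k2, h2'⟩ := ev_le (ci 2)
  obtain ⟨k3, h3⟩ := ev_le (ci 3)
  obtain ⟨k4, h4⟩ := ev_le (f := fun θ : Fin 4 → ℝ => ‖((1 + θ 3 : ℝ) : ℂ)‖) (x := θ₀)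
    ((Complex.continuous_ofReal.comp (continuous_const.add (continuous_apply 3))).norm.continuousAt)
  obtain ⟨k5, h5⟩ := ev_le (cc (smooth_aux rho_contDiffOn he).2.1)
  obtain ⟨k6, h6⟩ := ev_le (cc (smooth_aux rho_contDiffOn he).2.2)
  obtain ⟨k7, h7⟩ := ev_le (cc (smooth_aux tau_contDiffOn he).2.1)
  obtain ⟨k8, h8⟩ := ev_le (cc (smooth_aux tau_contDiffOn he).2.2)
  obtain ⟨k9, h9⟩ := ev_le (Complex.continuous_ofReal.continuousAt.comp hlog).norm
  obtain ⟨k10, h10⟩ := ev_le ((hc2.mul hlog).rexp)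
  obtain ⟨k11, h11⟩ := ev_le (f := fun θ : Fin 4 → ℝ => ‖rot (θ 2)‖) (x := θ₀)
    (by
      have : Continuous (fun θ : Fin 4 → ℝ => ((θ 2 - 1 : ℝ) : ℂ)) :=
        Complex.continuous_ofReal.comp ((continuous_apply 2).sub continuous_const)
      unfold rot
      exact (continuous_const.mul ((this.mul continuous_const).cexp)).norm.continuousAt)
  refine ⟨1 + |k0| + |k1| + |k2| + |k3| + |k4| + |k5| + |k6| + |k7| + |k8| + |k9| + |k10| + |k11|, ?_⟩
  filter_upwards [h0, h1', h2', h3, h4, h5, h6, h7, h8, h9, h10, h11] with θ a0 a1 a2 a3 a4 a5 a6 a7 a8 a9 a10 a11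
  have p0 := abs_nonneg k0
  have p1 := abs_nonneg k1
  have p2 := abs_nonneg k2
  have p3 := abs_nonneg k3
  have p4 := abs_nonneg k4
  have p5 := abs_nonneg k5
  have p6 := abs_nonneg k6
  have p7 := abs_nonneg k7
  have p8 := abs_nonneg k8
  have p9 := abs_nonneg k9
  have p10 := abs_nonneg k10
  have p11 := abs_nonneg k11
  refine ⟨by linarith, ?_, ?_, ?_, ?_, ?_, ?_, ?_, ?_, ?_, ?_, ?_, ?_⟩
  · linarith [le_abs_self k0]
  · linarith [le_abs_self k1]
  · linarith [le_abs_self k2]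
  · linarith [le_abs_self k3]
  · linarith [le_abs_self k4]
  · linarith [le_abs_self k5]
  · linarith [le_abs_self k6]
  · linarith [le_abs_self k7]
  · linarith [le_abs_self k8]
  · refine le_trans a9 ?_; linarith [le_abs_self k9]
  · refine le_trans a10 ?_; linarith [le_abs_self k10]
  · linarith [le_abs_self k11]

def TT (q : ℝ) : ℝ := 1 + |Real.log q|
def PP (a q : ℝ) : ℝ := 1 + q ^ (a - 1)


theorem TT_one (q : ℝ) : 1 ≤ TT q := by unfold TT; linarith [abs_nonneg (Real.log q)]
theorem PP_one (a : ℝ) {q : ℝ} (hq : 0 ≤ q) : 1 ≤ PP a q := by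
  unfold PP; linarith [Real.rpow_nonneg hq (a - 1)]

theorem LL_bd {K : ℝ} {θ : Fin 4 → ℝ} (h : Bd K θ) {v : ℂ} : ‖LL (θ 1) v‖ ≤ 6 * K * TT ‖v‖ := by
  have h1 : ‖Complex.log v‖ ≤ |Real.log ‖v‖| + 4 := by
    refine (Complex.norm_le_abs_re_add_abs_im _).trans ?_
    rw [Complex.log_re, Complex.log_im]
    have := Complex.abs_arg_le_pi v
    have := Real.pi_lt_four
    linarith
  have h2 : ‖LL (θ 1) v‖ ≤ K + (|Real.log ‖v‖| + 4) := norm_add_le_of_le h.l0 h1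
  have h3 := h.one
  have h4 := TT_one ‖v‖
  have h5 : |Real.log ‖v‖| = TT ‖v‖ - 1 := by unfold TT; ring
  rw [h5] at h2
  nlinarith

theorem exp_re_bd {K : ℝ} {θ : Fin 4 → ℝ} (h : Bd K θ) {v : ℂ} (hv : v ≠ 0) : Real.exp ((((θ 2 - 1 : ℝ) : ℂ) * LL (θ 1) v).re) ≤ K * ‖v‖ ^ (θ 2 - 1) := by
  have hq : 0 < ‖v‖ := norm_pos_iff.2 hv
  rw [Complex.re_ofReal_mul, LL, Complex.add_re, Complex.ofReal_re, Complex.log_re, mul_add,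
    Real.exp_add, mul_comm _ (Real.log ‖v‖), ← Real.rpow_def_of_pos hq]
  exact mul_le_mul_of_nonneg_right h.e0 (Real.rpow_nonneg hq.le _)

theorem ex_bd {K : ℝ} {θ : Fin 4 → ℝ} (h : Bd K θ) {v : ℂ} (hv : v ≠ 0) : ‖ex θ v‖ ≤ K * ‖v‖ ^ (θ 2 - 1) := by
  rw [ex, Complex.norm_exp]; exact exp_re_bd h hv

theorem ex_bd' {K : ℝ} {θ : Fin 4 → ℝ} (h : Bd K θ) {v : ℂ} (hv : v ≠ 0) : ‖ex θ v‖ ≤ K * PP (θ 2) ‖v‖ := by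
  refine (ex_bd h hv).trans ?_
  have := h.one
  unfold PP; nlinarith

theorem ee_bd {K : ℝ} {θ : Fin 4 → ℝ} (h : Bd K θ) {v : ℂ} (hv : v ≠ 0) : ‖ee θ v‖ ≤ K * PP (θ 2) ‖v‖ := by
  refine (EE_bound _).trans ?_
  have := exp_re_bd h hv
  have := h.one
  unfold PP; nlinarith

theorem de_bd {K : ℝ} {θ : Fin 4 → ℝ} (h : Bd K θ) {v : ℂ} (hv : v ≠ 0) : ‖de θ v‖ ≤ 3 * (K * PP (θ 2) ‖v‖) := by
  refine (dEE_bound _).trans ?_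
  have := exp_re_bd h hv
  have := h.one
  unfold PP; nlinarith

theorem poly_aux {K T P q X : ℝ} (hK : 1 ≤ K) (hT : 1 ≤ T) (hP : 1 ≤ P) (_hq : 0 ≤ q)
    (hX : ∀ k t p : ℝ, 0 ≤ k → 0 ≤ t → 0 ≤ p → K = 1 + k → T = 1 + t → P = 1 + p →
      X ≤ 1000 * (1+k) ^ 6 * (q * ((1+t) ^ 2 * (1+p)))) : X ≤ 1000 * K ^ 6 * (q * (T ^ 2 * P)) := by
  have := hX (K - 1) (T - 1) (P - 1) (by linarith) (by linarith) (by linarith) (by ring) (by ring)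
    (by ring)
  simpa using this

theorem AA_bd {K : ℝ} {θ : Fin 4 → ℝ} (h : Bd K θ) {v : ℂ} (hv : v ≠ 0) : ‖AA θ v‖ ≤ 1000 * K ^ 6 * (‖v‖ * (TT ‖v‖ ^ 2 * PP (θ 2) ‖v‖)) := by
  have hL := LL_bd (v := v) h
  have hE := ee_bd h hv
  have := norm_sub_le_of_le (norm_mul_le_of_le h.b0 (le_refl ‖v‖)) (norm_mul_le_of_le
    (norm_mul_le_of_le h.b3 (norm_mul_le_of_le h.b1 (le_refl ‖v‖)))
    (norm_add_le_of_le (norm_mul_le_of_le h.r0 (norm_mul_le_of_le hL hE)) h.t0))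
  refine (this : ‖AA θ v‖ ≤ _).trans (poly_aux h.one (TT_one _) (PP_one _ (norm_nonneg v)) (norm_nonneg v) ?_)
  intro k t p hk ht hp hK hT hP
  rw [hK, hT, hP, ← sub_nonneg]
  have := norm_nonneg v
  ring_nf; positivity

theorem BB_bd0 {K : ℝ} {θ : Fin 4 → ℝ} (h : Bd K θ) {v : ℂ} (hv : v ≠ 0) : ‖BB θ v‖ ≤ K * K * K * K * ‖v‖ ^ (θ 2) := by
  have hq : 0 < ‖v‖ := norm_pos_iff.2 hv
  have := norm_mul_le_of_le (norm_mul_le_of_le h.b4 h.ro)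
    (norm_mul_le_of_le (norm_mul_le_of_le h.b1 (le_refl ‖v‖)) (ex_bd h hv))
  refine (this : ‖BB θ v‖ ≤ _).trans (le_of_eq ?_)
  have : ‖v‖ ^ (θ 2) = ‖v‖ * ‖v‖ ^ (θ 2 - 1) := by
    rw [Real.rpow_sub_one hq.ne']; field_simp
  rw [this]; ring

theorem dA_bd {K : ℝ} {θ : Fin 4 → ℝ} (h : Bd K θ) {v : ℂ} (i : Fin 4) (hv : v ≠ 0) :
    ‖dA i θ v‖ ≤ 1000 * K ^ 6 * (‖v‖ * (TT ‖v‖ ^ 2 * PP (θ 2) ‖v‖)) := by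
  have hL := LL_bd (v := v) h
  have hE := ee_bd h hv
  have hx := ex_bd' h hv
  have hd := de_bd h hv
  have h3' : ‖-(θ 3 : ℂ)‖ ≤ K := by rw [norm_neg]; exact h.b3
  have h1' : ‖-((θ 1 : ℂ) * v)‖ ≤ K * ‖v‖ := by
    rw [norm_neg]; exact norm_mul_le_of_le h.b1 le_rfl
  have hL2 : ‖LL (θ 1) v ^ 2‖ ≤ (6 * K * TT ‖v‖) ^ 2 := by
    rw [norm_pow]; exact pow_le_pow_left₀ (norm_nonneg _) hL 2
  have fin : ∀ X, (∀ k t p : ℝ, 0 ≤ k → 0 ≤ t → 0 ≤ p → K = 1 + k → TT ‖v‖ = 1 + t → PP (θ 2) ‖v‖ = 1 + p →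
      X ≤ 1000 * (1+k) ^ 6 * (‖v‖ * ((1+t) ^ 2 * (1+p)))) → X ≤ 1000 * K ^ 6 * (‖v‖ * (TT ‖v‖ ^ 2 * PP (θ 2) ‖v‖)) :=
    fun X hX => poly_aux h.one (TT_one _) (PP_one _ (norm_nonneg v)) (norm_nonneg v) hX
  have hn := norm_nonneg v
  fin_cases i
  · refine fin _ ?_
    intro k t p hk ht hp hK hT hP
    show ‖v‖ ≤ _
    rw [← sub_nonneg]; ring_nf; positivity
  · refine (norm_mul_le_of_le (norm_mul_le_of_le h3' (le_refl ‖v‖)) (norm_add_le_of_le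
      (norm_mul_le_of_le h.r0 (norm_add_le_of_le (norm_mul_le_of_le hL hE) hx)) h.t0) :
        ‖dA 1 θ v‖ ≤ _).trans (fin _ ?_)
    intro k t p hk ht hp hK hT hP
    rw [hK, hT, hP, ← sub_nonneg]; ring_nf; positivity
  · refine (norm_mul_le_of_le (norm_mul_le_of_le h3' (norm_mul_le_of_le h.b1 (le_refl ‖v‖)))
      (norm_add_le_of_le (norm_add_le_of_le (norm_mul_le_of_le h.r1 (norm_mul_le_of_le hL hE))
      (norm_mul_le_of_le h.r0 (norm_mul_le_of_le hL2 hd))) h.t1) :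
        ‖dA 2 θ v‖ ≤ _).trans (fin _ ?_)
    intro k t p hk ht hp hK hT hP
    rw [hK, hT, hP, ← sub_nonneg]; ring_nf; positivity
  · refine (norm_mul_le_of_le h1'
      (norm_add_le_of_le (norm_mul_le_of_le h.r0 (norm_mul_le_of_le hL hE)) h.t0) :
        ‖dA 3 θ v‖ ≤ _).trans (fin _ ?_)
    intro k t p hk ht hp hK hT hP
    rw [hK, hT, hP, ← sub_nonneg]; ring_nf; positivity

theorem dB_bd0 {K : ℝ} {θ : Fin 4 → ℝ} (h : Bd K θ) {v : ℂ} (i : Fin 4) (hv : v ≠ 0) :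
    ‖dB i θ v‖ ≤ 100 * K ^ 6 * (‖v‖ ^ (θ 2) * (if i = 2 then TT ‖v‖ else 1)) := by
  have hq : 0 < ‖v‖ := norm_pos_iff.2 hv
  have hq2 : ‖v‖ ^ (θ 2) = ‖v‖ * ‖v‖ ^ (θ 2 - 1) := by
    rw [Real.rpow_sub_one hq.ne']; field_simp
  have hr := Real.rpow_nonneg hq.le (θ 2 - 1)
  have hx := ex_bd h hv
  have hL := LL_bd (v := v) h
  have hT := TT_one ‖v‖
  have hK := h.one
  have hpi : ‖(-(I * Real.pi / 2) : ℂ)‖ ≤ 2 := by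
    simp [abs_of_pos Real.pi_pos]; linarith [Real.pi_lt_four]
  obtain ⟨k, hk, rfl⟩ : ∃ k, 0 ≤ k ∧ K = 1 + k := ⟨K - 1, by linarith, by ring⟩
  obtain ⟨t, ht, hTe⟩ : ∃ k, 0 ≤ k ∧ TT ‖v‖ = 1 + k := ⟨TT ‖v‖ - 1, by linarith, by ring⟩
  rw [hq2]
  fin_cases i
  · show ‖(0:ℂ)‖ ≤ _
    rw [norm_zero]; simp; positivity
  · refine (norm_mul_le_of_le (norm_mul_le_of_le h.b4 h.ro)
      (norm_mul_le_of_le (norm_mul_le_of_le h.b2 (le_refl ‖v‖)) hx) : ‖dB 1 θ v‖ ≤ _).trans ?_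
    simp only [Fin.reduceFinMk, Fin.reduceEq, if_false]
    rw [← sub_nonneg]; ring_nf; positivity
  · refine (norm_mul_le_of_le (norm_mul_le_of_le (norm_mul_le_of_le h.b4 h.ro)
      (norm_mul_le_of_le (norm_mul_le_of_le h.b1 (le_refl ‖v‖)) hx))
        (norm_add_le_of_le hL hpi) : ‖dB 2 θ v‖ ≤ _).trans ?_
    simp only [Fin.reduceFinMk, if_true, hTe]
    rw [← sub_nonneg]; ring_nf; positivity
  · refine (norm_mul_le_of_le h.ro
      (norm_mul_le_of_le (norm_mul_le_of_le h.b1 (le_refl ‖v‖)) hx) : ‖dB 3 θ v‖ ≤ _).trans ?_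
    simp only [Fin.reduceFinMk, Fin.reduceEq, if_false]
    rw [← sub_nonneg]; ring_nf; positivity

theorem rpow_le_NP {q : ℝ} (hq : 0 < q) (a : ℝ) : q ^ a ≤ q * PP a q := by
  rw [PP, mul_add, Real.rpow_sub_one hq.ne']; 
  have : q * (q ^ a / q) = q ^ a := by field_simp
  linarith

theorem dB_bd {K : ℝ} {θ : Fin 4 → ℝ} (h : Bd K θ) {v : ℂ} (i : Fin 4) (hv : v ≠ 0) :
    ‖dB i θ v‖ ≤ 100 * K ^ 6 * (‖v‖ * (TT ‖v‖ ^ 2 * PP (θ 2) ‖v‖)) := by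
  refine (dB_bd0 h i hv).trans ?_
  have hq : 0 < ‖v‖ := norm_pos_iff.2 hv
  have hT := TT_one ‖v‖
  have hK := h.one
  refine mul_le_mul_of_nonneg_left ?_ (by positivity)
  have h1 := rpow_le_NP hq (θ 2)
  have h2 : (if i = 2 then TT ‖v‖ else 1) ≤ TT ‖v‖ ^ 2 := by split_ifs <;> nlinarith
  calc _ ≤ ‖v‖ * PP (θ 2) ‖v‖ * TT ‖v‖ ^ 2 := by
        refine mul_le_mul h1 h2 ?_ ((Real.rpow_nonneg hq.le _).trans h1)
        split_ifs <;> linarith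
    _ = _ := by ring

end

noncomputable section
open Complex (I)
open Filter Topology Asymptotics

theorem qTP_bd {m a q : ℝ} (hm : 0 < m) (hm1 : m ≤ 1) (ha : m ≤ a) (ha2 : a ≤ 2) (hq : 0 < q) :
    q * (TT q ^ 2 * PP a q) ≤ 2 * (1 + 4 / m) ^ 2 * (q ^ (m / 2) + q ^ (4:ℕ)) := by
  have hqP : q * PP a q = q + q ^ a := by
    rw [PP, mul_add, Real.rpow_sub_one hq.ne']; field_simp
  have hT := TT_one q
  have e1 : q * (TT q ^ 2 * PP a q) = TT q ^ 2 * (q + q ^ a) := by rw [← hqP]; ring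
  have hm4 : 0 < 4 / m := by positivity
  have hqm : 0 < q ^ (m / 2) := Real.rpow_pos_of_pos hq _
  have hq4 : 0 < q ^ 4 := by positivity
  rw [e1]
  rcases le_total q 1 with h | h
  · have h1 : TT q ≤ (1 + 4 / m) * q ^ (-(m / 4)) := by
      have hl : Real.log q ≤ 0 := Real.log_nonpos hq.le h
      rw [TT, abs_of_nonpos hl]
      have h2 := Real.log_le_rpow_div (x := q⁻¹) (ε := m / 4) (by positivity) (by positivity)
      rw [Real.log_inv, Real.inv_rpow hq.le, ← Real.rpow_neg hq.le] at h2
      have h3 : 1 ≤ q ^ (-(m / 4)) := Real.one_le_rpow_of_pos_of_le_one_of_nonpos hq h (by linarith)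
      have h4 : q ^ (-(m / 4)) / (m / 4) = 4 / m * q ^ (-(m / 4)) := by field_simp
      nlinarith
    have h5 : q ≤ q ^ m := by
      simpa using Real.rpow_le_rpow_of_exponent_ge hq h hm1
    have h6 : q ^ a ≤ q ^ m := Real.rpow_le_rpow_of_exponent_ge hq h ha
    have h7 : TT q ^ 2 ≤ (1 + 4 / m) ^ 2 * q ^ (-(m / 2)) := by
      calc TT q ^ 2 ≤ ((1 + 4 / m) * q ^ (-(m / 4))) ^ 2 := pow_le_pow_left₀ (by linarith) h1 2
        _ = _ := by
          rw [mul_pow, ← Real.rpow_natCast (q ^ (-(m/4))), ← Real.rpow_mul hq.le]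
          congr 2; push_cast; ring
    calc TT q ^ 2 * (q + q ^ a) ≤ ((1 + 4 / m) ^ 2 * q ^ (-(m / 2))) * (2 * q ^ m) := by
          refine mul_le_mul h7 (by linarith) (by positivity) (by positivity)
      _ = 2 * (1 + 4 / m) ^ 2 * q ^ (m / 2) := by
          have : q ^ (m / 2) = q ^ (-(m / 2)) * q ^ m := by
            rw [← Real.rpow_add hq]; congr 1; ring
          rw [this]; ring
      _ ≤ _ := by
          refine mul_le_mul_of_nonneg_left (by linarith) (by positivity)
  · have h1 : TT q ≤ q := by
      rw [TT, abs_of_nonneg (Real.log_nonneg h)]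
      linarith [Real.log_le_sub_one_of_pos hq]
    have h6 : q ^ a ≤ q ^ 2 := by
      simpa using Real.rpow_le_rpow_of_exponent_le h ha2
    have h5 : q ≤ q ^ 2 := by nlinarith
    calc TT q ^ 2 * (q + q ^ a) ≤ q ^ 2 * (2 * q ^ 2) := by
          refine mul_le_mul (pow_le_pow_left₀ (by linarith) h1 2) (by linarith) (by positivity) (by positivity)
      _ = 2 * 1 ^ 2 * q ^ 4 := by ring
      _ ≤ 2 * (1 + 4 / m) ^ 2 * q ^ 4 := by gcongr; linarith
      _ ≤ _ := by
          refine mul_le_mul_of_nonneg_left (by linarith) (by positivity)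

theorem decay {a c C : ℝ} (ha : 0 < a) (hc : 0 < c) :
    ∃ K > 0, ∀ y : ℝ, 1 ≤ y →
      y ^ 8 * Real.exp (-(c * y ^ a) + C * ((2 + Real.log y) ^ 2 * (1 + y ^ (a - 1)))) ≤ K := by
  set η := min 1 a / 2 with hη
  have hη0 : 0 < η := by positivity
  have l0 : (fun y : ℝ => Real.log y) =o[atTop] fun y => y ^ η := isLittleO_log_rpow_atTop hη0
  have l1 : (fun _ : ℝ => (2:ℝ)) =o[atTop] fun y : ℝ => y ^ η := by
    refine isLittleO_const_left.2 (Or.inr ?_)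
    exact tendsto_norm_atTop_atTop.comp (tendsto_rpow_atTop hη0)
  have l2 : (fun y : ℝ => (2 + Real.log y) ^ 2) =o[atTop] fun y => (y ^ η) ^ 2 := (l1.add l0).pow two_pos
  have l3 : (fun y : ℝ => 1 + y ^ (a - 1)) =O[atTop] fun y => y ^ (max (a - 1) 0) := by
    refine IsBigO.of_bound 2 ?_
    filter_upwards [eventually_ge_atTop 1] with y hy
    have hy0 : 0 < y := by linarith
    rw [Real.norm_of_nonneg (by positivity), Real.norm_of_nonneg (by positivity)]
    have h1 : y ^ (a - 1) ≤ y ^ (max (a - 1) 0) := Real.rpow_le_rpow_of_exponent_le hy (le_max_left _ _)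
    have h2 : 1 ≤ y ^ (max (a - 1) 0) := Real.one_le_rpow hy (le_max_right _ _)
    linarith
  have l4 : (fun y : ℝ => C * ((2 + Real.log y) ^ 2 * (1 + y ^ (a - 1)))) =o[atTop] fun y => y ^ a := by
    refine IsLittleO.const_mul_left ?_ C
    refine (l2.mul_isBigO l3).congr' EventuallyEq.rfl ?_
    filter_upwards [eventually_gt_atTop 0] with y hy
    rw [← Real.rpow_natCast, ← Real.rpow_mul hy.le, ← Real.rpow_add hy]
    congr 1
    rw [hη]; push_cast
    rcases le_total a 1 with h | h
    · rw [min_eq_right h, max_eq_right (by linarith)]; ring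
    · rw [min_eq_left h, max_eq_left (by linarith)]; ring
  have l5 : (fun y : ℝ => 8 * Real.log y) =o[atTop] fun y => y ^ a :=
    (isLittleO_log_rpow_atTop ha).const_mul_left 8
  have l6 := (l5.add l4).bound hc
  obtain ⟨Y, hY⟩ := eventually_atTop.1 l6
  have hcont : ContinuousOn (fun y : ℝ => y ^ 8 * Real.exp (-(c * y ^ a) +
      C * ((2 + Real.log y) ^ 2 * (1 + y ^ (a - 1))))) (Set.Icc 1 Y) := by
    have h1 (p : ℝ) : ContinuousOn (fun y : ℝ => y ^ p) (Set.Icc 1 Y) := fun y hy =>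
      (Real.continuousAt_rpow_const y p (Or.inl (by linarith [hy.1]))).continuousWithinAt
    have h2 : ContinuousOn (fun y : ℝ => Real.log y) (Set.Icc 1 Y) := fun y hy =>
      (Real.continuousAt_log (by linarith [hy.1])).continuousWithinAt
    have h3 := h1 a
    have h4 := h1 (a - 1)
    fun_prop
  obtain ⟨K, hK⟩ := isCompact_Icc.exists_bound_of_continuousOn hcont
  refine ⟨max K 1, by positivity, fun y hy => ?_⟩
  rcases le_total y Y with h | h
  · exact (le_abs_self _).trans ((hK y ⟨hy, h⟩).trans (le_max_left _ _))
  · refine le_trans ?_ (le_max_right _ _)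
    have hy0 : 0 < y := by linarith
    have := hY y h
    rw [Real.norm_of_nonneg (Real.rpow_nonneg hy0.le _)] at this
    have h2 := (le_abs_self _).trans this
    have h8 : y ^ 8 = Real.exp (8 * Real.log y) := by
      rw [mul_comm, Real.exp_mul, Real.exp_log hy0]; norm_cast
    rw [h8, ← Real.exp_add, Real.exp_le_one_iff]
    linarith

theorem TP_large {a y q : ℝ} (ha2 : a ≤ 2) (hy : 1 ≤ y) (h1 : y ≤ q) (h2 : q ≤ 2 * y) :
    TT q ^ 2 * PP a q ≤ 2 * ((2 + Real.log y) ^ 2 * (1 + y ^ (a - 1))) := by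
  have hy0 : 0 < y := by linarith
  have hl := Real.log_nonneg hy
  have t1 : TT q ≤ 2 + Real.log y := by
    rw [TT, abs_of_nonneg (Real.log_nonneg (hy.trans h1))]
    have := Real.log_le_log (by linarith) h2
    rw [Real.log_mul two_ne_zero hy0.ne'] at this
    linarith [Real.log_two_lt_d9]
  have t2 : PP a q ≤ 2 * (1 + y ^ (a - 1)) := by
    rw [PP]
    have hyp := Real.rpow_nonneg hy0.le (a - 1)
    rcases le_total a 1 with h | h
    · have := Real.rpow_le_rpow_of_nonpos hy0 h1 (by linarith : a - 1 ≤ 0)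
      linarith
    · have := Real.rpow_le_rpow (by linarith) h2 (by linarith : 0 ≤ a - 1)
      rw [Real.mul_rpow (by norm_num) hy0.le] at this
      have h3 : (2:ℝ) ^ (a - 1) ≤ 2 := by
        simpa using Real.rpow_le_rpow_of_exponent_le (by norm_num : (1:ℝ) ≤ 2) (by linarith : a - 1 ≤ 1)
      nlinarith
  have := mul_le_mul (pow_le_pow_left₀ (by linarith [TT_one q]) t1 2) t2
    (by linarith [PP_one a (by linarith : 0 ≤ q)]) (by positivity)
  linarith
end

noncomputable section
open Complex (I)
open Filter Topology Asymptotics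

def Psi (θ : Fin 4 → ℝ) (v : ℂ) : ℂ := AA θ v + BB θ v
def dPsi (i : Fin 4) (θ : Fin 4 → ℝ) (v : ℂ) : ℂ := dA i θ v + dB i θ v

theorem dEE_diff : Differentiable ℂ (deriv EE) := by
  have : ContDiff ℂ 2 EE := EE_diff.contDiff
  exact (this.iterate_deriv' 1 1).differentiable (by norm_num)

theorem LL_vderiv (s : ℝ) {v : ℂ} (hv : v ∈ Complex.slitPlane) : HasDerivAt (LL s) (v⁻¹) v := by
  unfold LL
  exact (Complex.hasDerivAt_log hv).const_add _

theorem ex_diff (θ : Fin 4 → ℝ) {v : ℂ} (hv : v ∈ Complex.slitPlane) : DifferentiableAt ℂ (ex θ) v :=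
  ((LL_vderiv (θ 1) hv).differentiableAt.const_mul _).cexp
theorem ee_diff (θ : Fin 4 → ℝ) {v : ℂ} (hv : v ∈ Complex.slitPlane) : DifferentiableAt ℂ (ee θ) v :=
  DifferentiableAt.comp v (g := EE) (EE_diff _) ((LL_vderiv (θ 1) hv).differentiableAt.const_mul _)
theorem de_diff (θ : Fin 4 → ℝ) {v : ℂ} (hv : v ∈ Complex.slitPlane) : DifferentiableAt ℂ (de θ) v :=
  DifferentiableAt.comp v (g := deriv EE) (dEE_diff _) ((LL_vderiv (θ 1) hv).differentiableAt.const_mul _)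

theorem Psi_vderiv {θ : Fin 4 → ℝ} (h1 : 0 < θ 1) {v : ℂ} (hv : v ∈ Complex.slitPlane) :
    HasDerivAt (Psi θ) ((θ 0 : ℂ) + (θ 1 : ℂ) / v * dPsi 1 θ v) v := by
  have hv0 : v ≠ 0 := Complex.slitPlane_ne_zero hv
  have hs : (θ 1 : ℂ) ≠ 0 := by exact_mod_cast h1.ne'
  have hL := LL_vderiv (θ 1) hv
  have hE : HasDerivAt (ee θ) _ v :=
      HasDerivAt.comp v (h₂ := EE) (EE_diff _).hasDerivAt (hL.const_mul ((θ 2 - 1 : ℝ) : ℂ))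
  have hX : HasDerivAt (ex θ) _ v := (hL.const_mul ((θ 2 - 1 : ℝ) : ℂ)).cexp
  have key := EE_deriv (((θ 2 - 1 : ℝ) : ℂ) * LL (θ 1) v)
  have hA := ((hasDerivAt_id v).const_mul (θ 0 : ℂ)).sub
    ((((hasDerivAt_id v).const_mul (θ 1 : ℂ)).const_mul (θ 3 : ℂ)).mul
      (((hL.mul hE).const_mul (rho (θ 2 - 1) : ℂ)).add_const (tau (θ 2 - 1) : ℂ)))
  have hB := (((hasDerivAt_id v).const_mul (θ 1 : ℂ)).mul hX).const_mul
    (((1 + θ 3 : ℝ) : ℂ) * rot (θ 2))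
  refine HasDerivAt.congr_deriv (hA.add hB) ?_
  simp only [dPsi, dA, dB, id, Pi.mul_apply, ex, ee, Matrix.cons_val_one, Matrix.cons_val_zero, ← key]
  rw [show (θ 2 : ℂ) = ((θ 2 - 1 : ℝ) : ℂ) + 1 by push_cast; ring]
  generalize ((θ 2 - 1 : ℝ) : ℂ) = e at *
  field_simp
  ring

theorem dPsi_diff (i : Fin 4) (θ : Fin 4 → ℝ) {v : ℂ} (hv : v ∈ Complex.slitPlane) :
    DifferentiableAt ℂ (dPsi i θ) v := by
  have h1 := ex_diff θ hv
  have h2 := ee_diff θ hv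
  have h3 := de_diff θ hv
  have h4 : DifferentiableAt ℂ (LL (θ 1)) v := (LL_vderiv (θ 1) hv).differentiableAt
  unfold dPsi dA dB
  fin_cases i <;> simp <;> fun_prop

theorem Psi_zero (θ : Fin 4 → ℝ) : Psi θ 0 = 0 := by simp [Psi, AA, BB]
theorem dPsi_zero (i : Fin 4) (θ : Fin 4 → ℝ) : dPsi i θ 0 = 0 := by
  fin_cases i <;> simp [dPsi, dA, dB]

theorem dPsi_bd {K : ℝ} {θ : Fin 4 → ℝ} (h : Bd K θ) (i : Fin 4) {v : ℂ} (hv : v ≠ 0) :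
    ‖dPsi i θ v‖ ≤ 1100 * K ^ 6 * (‖v‖ * (TT ‖v‖ ^ 2 * PP (θ 2) ‖v‖)) := by
  refine (norm_add_le_of_le (dA_bd h i hv) (dB_bd h i hv)).trans (le_of_eq (by ring))

theorem Psi_bd {K : ℝ} {θ : Fin 4 → ℝ} (h : Bd K θ) {v : ℂ} (hv : v ≠ 0) :
    ‖Psi θ v‖ ≤ 1100 * K ^ 6 * (‖v‖ * (TT ‖v‖ ^ 2 * PP (θ 2) ‖v‖)) := by
  have hq : 0 < ‖v‖ := norm_pos_iff.2 hv
  have hK := h.one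
  have hT := TT_one ‖v‖
  have hP := PP_one (θ 2) hq.le
  refine (norm_add_le_of_le (AA_bd h hv) (BB_bd0 h hv)).trans ?_
  have h1 := rpow_le_NP hq (θ 2)
  have h2 : K * K * K * K ≤ 100 * K ^ 6 := by
    have : (1:ℝ) ≤ K ^ 2 := one_le_pow₀ hK
    have h4 : 0 ≤ K ^ 4 := by positivity
    nlinarith
  have h3 : ‖v‖ ^ θ 2 ≤ ‖v‖ * (TT ‖v‖ ^ 2 * PP (θ 2) ‖v‖) := by
    refine h1.trans (mul_le_mul_of_nonneg_left ?_ hq.le)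
    have : 1 ≤ TT ‖v‖ ^ 2 := one_le_pow₀ hT
    nlinarith
  have := mul_le_mul h2 h3 (Real.rpow_nonneg hq.le _) (by positivity)
  linarith

/-- uniform bound -/
theorem unif_bd {f : (Fin 4 → ℝ) → ℂ → ℂ} (hf0 : ∀ θ, f θ 0 = 0)
    (hf : ∀ (K : ℝ) (θ : Fin 4 → ℝ), Bd K θ → ∀ v : ℂ, v ≠ 0 → ‖f θ v‖ ≤ 1100 * K ^ 6 * (‖v‖ * (TT ‖v‖ ^ 2 * PP (θ 2) ‖v‖)))
    {θ₀ : Fin 4 → ℝ} (h1 : 0 < θ₀ 1) (h2 : θ₀ 2 ∈ Set.Ioo (0:ℝ) 2) :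
    ∃ C > (0:ℝ), ∃ m > (0:ℝ), m ≤ 1 ∧ ∀ᶠ θ in 𝓝 θ₀, ∀ v, ‖f θ v‖ ≤ C * (‖v‖ ^ (m / 2) + ‖v‖ ^ 4) := by
  obtain ⟨K, hK⟩ := Bd_ev h1 h2
  set m := min (θ₀ 2 / 2) 1 with hm
  have hm0 : 0 < m := by have := h2.1; positivity
  have hK1 : 1 ≤ K := (hK.self_of_nhds).one
  have e1 : ∀ᶠ θ : Fin 4 → ℝ in 𝓝 θ₀, m < θ 2 ∧ θ 2 < 2 := by
    have hc : ContinuousAt (fun θ : Fin 4 → ℝ => θ 2) θ₀ := (continuous_apply 2).continuousAt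
    have h3 : m < θ₀ 2 := lt_of_le_of_lt (min_le_left _ _) (by linarith [h2.1])
    exact (hc.eventually (lt_mem_nhds h3)).and (hc.eventually (gt_mem_nhds h2.2))
  refine ⟨1100 * K ^ 6 * (2 * (1 + 4 / m) ^ 2), by positivity, m, hm0, min_le_right _ _, ?_⟩
  filter_upwards [hK, e1] with θ hθ hm2 v
  by_cases hv : v = 0
  · rw [hv, hf0]; simp; positivity
  · have := qTP_bd hm0 (min_le_right _ _) hm2.1.le hm2.2.le (norm_pos_iff.2 hv)
    refine (hf K θ hθ v hv).trans ?_
    rw [mul_assoc (1100 * K ^ 6)]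
    exact mul_le_mul_of_nonneg_left this (by positivity)

theorem unif_cont0 {f : ℂ → ℂ} (h0 : f 0 = 0) {C m : ℝ} (hm : 0 < m)
    (h : ∀ v, ‖f v‖ ≤ C * (‖v‖ ^ (m / 2) + ‖v‖ ^ 4)) : ContinuousAt f 0 := by
  rw [ContinuousAt, h0]
  refine squeeze_zero_norm h ?_
  have h1 : ContinuousAt (fun v : ℂ => C * (‖v‖ ^ (m / 2) + ‖v‖ ^ 4)) 0 := by
    have : ContinuousAt (fun v : ℂ => ‖v‖ ^ (m/2)) 0 :=
      continuousAt_id.norm.rpow_const (Or.inr (by positivity))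
    fun_prop
  have h2 := h1.tendsto
  simpa [Real.zero_rpow (by positivity : m / 2 ≠ 0)] using h2

theorem Psi_unif {θ₀ : Fin 4 → ℝ} (h1 : 0 < θ₀ 1) (h2 : θ₀ 2 ∈ Set.Ioo (0:ℝ) 2) :
    ∃ C > (0:ℝ), ∃ m > (0:ℝ), m ≤ 1 ∧ ∀ᶠ θ in 𝓝 θ₀, ∀ v, ‖Psi θ v‖ ≤ C * (‖v‖ ^ (m / 2) + ‖v‖ ^ 4) :=
  unif_bd Psi_zero (fun _ _ h _ hv => Psi_bd h hv) h1 h2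

theorem dPsi_unif (i : Fin 4) {θ₀ : Fin 4 → ℝ} (h1 : 0 < θ₀ 1) (h2 : θ₀ 2 ∈ Set.Ioo (0:ℝ) 2) :
    ∃ C > (0:ℝ), ∃ m > (0:ℝ), m ≤ 1 ∧ ∀ᶠ θ in 𝓝 θ₀, ∀ v, ‖dPsi i θ v‖ ≤ C * (‖v‖ ^ (m / 2) + ‖v‖ ^ 4) :=
  unif_bd (dPsi_zero i) (fun _ _ h _ hv => dPsi_bd h i hv) h1 h2

def GG (i : Fin 4) (k : ℕ) (θ : Fin 4 → ℝ) (v : ℂ) : ℂ := v ^ k * (Complex.exp (Psi θ v) * dPsi i θ v)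

theorem GG_diff (i : Fin 4) (k : ℕ) {θ : Fin 4 → ℝ} (h1 : 0 < θ 1) {v : ℂ} (hv : v ∈ Complex.slitPlane) :
    DifferentiableAt ℂ (GG i k θ) v := by
  have := (Psi_vderiv h1 hv).differentiableAt
  have := dPsi_diff i θ hv
  unfold GG
  fun_prop

theorem GG_cont (i : Fin 4) (k : ℕ) {θ : Fin 4 → ℝ} (h1 : 0 < θ 1) (h2 : θ 2 ∈ Set.Ioo (0:ℝ) 2)
    {v : ℂ} (hv : v = 0 ∨ v ∈ Complex.slitPlane) :
    ContinuousAt (GG i k θ) v := by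
  rcases hv with rfl | hv
  · obtain ⟨C, _, m, hm, _, h⟩ := Psi_unif h1 h2
    obtain ⟨C', _, m', hm', _, h'⟩ := dPsi_unif i h1 h2
    have c1 := unif_cont0 (Psi_zero θ) hm h.self_of_nhds
    have c2 := unif_cont0 (dPsi_zero i θ) hm' h'.self_of_nhds
    unfold GG
    exact (continuousAt_id.pow k).mul (c1.cexp.mul c2)
  · exact (GG_diff i k h1 hv).continuousAt

theorem Psi_re {θ : Fin 4 → ℝ} (h1 : 0 < θ 1) (h2 : θ 2 ∈ Set.Ioo (0:ℝ) 2) {y : ℝ} (hy : 0 < y) :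
    (Psi θ (y * I)).re = -((θ 1 * y) ^ (θ 2)) := by
  rw [Psi, ← psi_link h1 h2 hy, psiM]
  have := mul_pos h1 hy
  split_ifs with h
  · simp only [h, Real.rpow_one, abs_of_pos this, Complex.add_re, Complex.sub_re, Complex.ofReal_re,
      Complex.I_mul_re, Complex.ofReal_im]
    simp
  · rw [abs_of_pos this]
    simp only [Complex.add_re, Complex.mul_re, Complex.ofReal_re,
      Complex.ofReal_im, Complex.one_re]
    simp

theorem AA_real {θ : Fin 4 → ℝ} {b : ℝ} (hb : 0 < b) : (AA θ b).im = 0 := by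
  have hL : LL (θ 1) b = ((Real.log (θ 1) + Real.log b : ℝ) : ℂ) := by
    rw [LL, ← Complex.ofReal_log hb.le]; push_cast; rfl
  have hE := EE_real ((θ 2 - 1) * (Real.log (θ 1) + Real.log b))
  have : ee θ b = (((ee θ b).re : ℝ) : ℂ) := by
    refine Complex.ext (by simp) ?_
    rw [ee, hL, ← Complex.ofReal_mul, hE]; simp
  rw [AA, this, hL]
  have : ((θ 0 : ℂ) * b - (θ 3 : ℂ) * ((θ 1 : ℂ) * b) *
    ((rho (θ 2 - 1) : ℂ) * (((Real.log (θ 1) + Real.log b : ℝ) : ℂ) * (((ee θ b).re : ℝ) : ℂ)) + (tau (θ 2 - 1) : ℂ)))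
    = ((θ 0 * b - θ 3 * (θ 1 * b) * (rho (θ 2 - 1) * ((Real.log (θ 1) + Real.log b) * (ee θ b).re) + tau (θ 2 - 1)) : ℝ) : ℂ) := by
    push_cast; rfl
  rw [this, Complex.ofReal_im]

theorem dA_real (i : Fin 4) {θ : Fin 4 → ℝ} (h1 : 0 < θ 1) (h2 : θ 2 ∈ Set.Ioo (0:ℝ) 2)
    {b : ℝ} (hb : 0 < b) : (dA i θ b).im = 0 := by
  have h := AA_deriv i h1 h2 (b : ℂ)
  have h3 : HasDerivAt (fun s => (AA (Function.update θ i s) b).im) ((dA i θ b).im) (θ i) :=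
    Complex.imCLM.hasFDerivAt.comp_hasDerivAt (θ i) h
  have h4 : (fun s => (AA (Function.update θ i s) b).im) = fun _ => (0:ℝ) := funext fun s => AA_real hb
  rw [h4] at h3
  exact h3.unique (hasDerivAt_const _ _)
end

noncomputable section
open Complex (I)
open Filter Topology Asymptotics

theorem mem_slit {b y : ℝ} (hb : 0 ≤ b) (_hy : 0 ≤ y) : ((b : ℂ) + y * I) = 0 ∨ ((b : ℂ) + y * I) ∈ Complex.slitPlane := by
  by_cases h : b = 0 ∧ y = 0
  · left; simp [h.1, h.2]
  · right
    rw [Complex.mem_slitPlane_iff]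
    by_cases hb0 : b = 0
    · right; simp; intro h3; exact h ⟨hb0, h3⟩
    · left; simp; positivity

theorem norm_mem {b y : ℝ} (hb : 0 ≤ b) (hb1 : b ≤ 1) (hy : 1 ≤ y) :
    y ≤ ‖((b : ℂ) + y * I)‖ ∧ ‖((b : ℂ) + y * I)‖ ≤ 2 * y := by
  constructor
  · have := Complex.abs_im_le_norm ((b : ℂ) + y * I)
    simp at this
    exact (le_abs_self y).trans this
  · refine (norm_add_le _ _).trans ?_
    simp [abs_of_nonneg hb, abs_of_nonneg (zero_le_one.trans hy)]
    linarith

theorem Psi_re_strip {θ : Fin 4 → ℝ} (h1 : 0 < θ 1) (h2 : θ 2 ∈ Set.Ioo (0:ℝ) 2) :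
    ∃ C > (0:ℝ), ∀ b y : ℝ, 0 ≤ b → b ≤ 1 → 1 ≤ y →
      (Psi θ (b + y * I)).re ≤ -((θ 1) ^ (θ 2) * y ^ (θ 2)) + C * ((2 + Real.log y) ^ 2 * (1 + y ^ (θ 2 - 1))) := by
  obtain ⟨K, hK⟩ := Bd_ev h1 h2
  have hB := hK.self_of_nhds
  have hK1 := hB.one
  set D := 1100 * K ^ 6 * 2 * θ 1 with hD
  have hD0 : 0 < D := by positivity
  refine ⟨|θ 0| + D, by positivity, fun b y hb hb1 hy => ?_⟩
  have hy0 : 0 < y := by linarith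
  set W := (2 + Real.log y) ^ 2 * (1 + y ^ (θ 2 - 1)) with hW
  have hW1 : 1 ≤ W := by
    have := Real.log_nonneg hy
    have h3 : 1 ≤ (2 + Real.log y) ^ 2 := by nlinarith
    have h4 : 0 < y ^ (θ 2 - 1) := Real.rpow_pos_of_pos hy0 _
    nlinarith
  have hder : ∀ s ∈ Set.Icc (0:ℝ) 1, HasDerivWithinAt (fun s : ℝ => Psi θ (s + y * I))
      ((θ 0 : ℂ) + (θ 1 : ℂ) / (s + y * I) * dPsi 1 θ (s + y * I)) (Set.Icc 0 1) s := by
    intro s hs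
    have hv : ((s : ℂ) + y * I) ∈ Complex.slitPlane := by
      rw [Complex.mem_slitPlane_iff]; right; simp; exact hy0.ne'
    have h3 : HasDerivAt (fun s : ℝ => (s : ℂ) + y * I) 1 s :=
      (Complex.ofRealCLM.hasDerivAt (x := s)).add_const _
    have := (Psi_vderiv h1 hv).scomp s h3
    rw [one_smul] at this
    exact this.hasDerivWithinAt
  have hbd : ∀ s ∈ Set.Icc (0:ℝ) 1, ‖((θ 0 : ℂ) + (θ 1 : ℂ) / (s + y * I) * dPsi 1 θ (s + y * I))‖ ≤ |θ 0| + D * W := by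
    intro s hs
    obtain ⟨n1, n2⟩ := norm_mem hs.1 hs.2 hy
    have hn0 : 0 < ‖((s : ℂ) + y * I)‖ := by linarith
    refine (norm_add_le _ _).trans ?_
    have h5 := dPsi_bd hB 1 (norm_pos_iff.1 hn0)
    have h6 := TP_large h2.2.le hy n1 n2
    rw [norm_mul, norm_div, Complex.norm_real, Complex.norm_real, Real.norm_eq_abs, Real.norm_eq_abs, abs_of_pos h1]
    refine add_le_add le_rfl ?_
    calc θ 1 / ‖((s : ℂ) + y * I)‖ * ‖dPsi 1 θ (s + y * I)‖
        ≤ θ 1 / ‖((s : ℂ) + y * I)‖ * (1100 * K ^ 6 * (‖((s : ℂ) + y * I)‖ * (TT ‖((s : ℂ) + y * I)‖ ^ 2 * PP (θ 2) ‖((s : ℂ) + y * I)‖))) := by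
          gcongr
      _ = θ 1 * (1100 * K ^ 6) * (TT ‖((s : ℂ) + y * I)‖ ^ 2 * PP (θ 2) ‖((s : ℂ) + y * I)‖) := by
          field_simp
      _ ≤ θ 1 * (1100 * K ^ 6) * (2 * W) := by gcongr
      _ = D * W := by rw [hD]; ring
  have mv := (convex_Icc (0:ℝ) 1).norm_image_sub_le_of_norm_hasDerivWithin_le hder hbd
    (Set.left_mem_Icc.2 zero_le_one) (⟨hb, hb1⟩ : b ∈ Set.Icc (0:ℝ) 1)
  have h7 := (Complex.re_le_norm _).trans mv
  have h8 := Psi_re h1 h2 hy0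
  rw [Real.mul_rpow h1.le hy0.le] at h8
  simp only [Complex.sub_re, Complex.ofReal_zero, zero_add, sub_zero, Real.norm_eq_abs, abs_of_nonneg hb] at h7
  rw [h8] at h7
  have h9 : (|θ 0| + D * W) * b ≤ (|θ 0| + D * W) * 1 := by gcongr
  have h10 : |θ 0| * 1 ≤ |θ 0| * W := by gcongr
  linarith

theorem GG_strip (i : Fin 4) (k : ℕ) (hk : k ≤ 1) {θ : Fin 4 → ℝ} (h1 : 0 < θ 1) (h2 : θ 2 ∈ Set.Ioo (0:ℝ) 2) :
    ∃ C > (0:ℝ), ∀ b y : ℝ, 0 ≤ b → b ≤ 1 → 0 ≤ y → ‖GG i k θ (b + y * I)‖ ≤ C * (1 + y ^ 2)⁻¹ := by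
  have hA : ∃ C > (0:ℝ), ∀ b y : ℝ, 0 ≤ b → b ≤ 1 → 1 ≤ y → ‖GG i k θ (b + y * I)‖ ≤ C * (1 + y ^ 2)⁻¹ := by
    obtain ⟨C, hC, hP⟩ := Psi_re_strip h1 h2
    obtain ⟨C', hC', m, hm, hm1, h'⟩ := dPsi_unif i h1 h2
    have h'' := h'.self_of_nhds
    obtain ⟨K, hK, hd⟩ := decay (C := C) h2.1 (Real.rpow_pos_of_pos h1 (θ 2))
    refine ⟨128 * C' * K, by positivity, fun b y hb hb1 hy => ?_⟩
    obtain ⟨n1, n2⟩ := norm_mem hb hb1 hy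
    have hd := hd y hy
    have hP := hP b y hb hb1 hy
    set v := (b : ℂ) + y * I
    have hv1 : 1 ≤ ‖v‖ := by linarith
    rw [GG, norm_mul, norm_mul, norm_pow, Complex.norm_exp]
    set E := Real.exp (-(θ 1 ^ θ 2 * y ^ θ 2) + C * ((2 + Real.log y) ^ 2 * (1 + y ^ (θ 2 - 1)))) with hE
    have hE0 : 0 < E := Real.exp_pos _
    have e1 : Real.exp (Psi θ v).re ≤ E := Real.exp_le_exp.2 hP
    have e2 : ‖dPsi i θ v‖ ≤ 32 * C' * y ^ 4 := by
      refine (h'' v).trans ?_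
      have : ‖v‖ ^ (m/2) ≤ ‖v‖ ^ 4 := by
        rw [← Real.rpow_natCast]
        exact Real.rpow_le_rpow_of_exponent_le hv1 (by norm_num; linarith)
      have h3 : ‖v‖ ^ 4 ≤ (2 * y) ^ 4 := by gcongr
      calc _ ≤ C' * ((2 * y) ^ 4 + (2 * y) ^ 4) := by gcongr; exact this.trans h3
        _ = _ := by ring
    have e3 : ‖v‖ ^ k ≤ 2 * y := by
      calc ‖v‖ ^ k ≤ ‖v‖ ^ 1 := pow_le_pow_right₀ hv1 hk
        _ ≤ _ := by simpa using n2
    calc ‖v‖ ^ k * (Real.exp (Psi θ v).re * ‖dPsi i θ v‖) ≤ (2 * y) * (E * (32 * C' * y ^ 4)) := by gcongr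
      _ = 64 * C' * (y ^ 5 * E) := by ring
      _ ≤ 128 * C' * K * (1 + y ^ 2)⁻¹ := by
        rw [← div_eq_mul_inv, le_div_iff₀ (by positivity)]
        have h5 : y ^ 5 * E * (1 + y ^ 2) ≤ 2 * K := by
          have : y ^ 5 * (1 + y ^ 2) ≤ 2 * y ^ 8 := by
            have h6 : y ^ 5 ≤ y ^ 8 := pow_le_pow_right₀ hy (by norm_num)
            have h7 : y ^ 7 ≤ y ^ 8 := pow_le_pow_right₀ hy (by norm_num)
            nlinarith
          nlinarith
        nlinarith
  obtain ⟨C, hC, h⟩ := hA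
  have hcomp : IsCompact (Set.Icc (0:ℝ) 1 ×ˢ Set.Icc (0:ℝ) 1) := isCompact_Icc.prod isCompact_Icc
  have hco : ContinuousOn (fun p : ℝ × ℝ => GG i k θ (p.1 + p.2 * I)) (Set.Icc (0:ℝ) 1 ×ˢ Set.Icc (0:ℝ) 1) := by
    intro p hp
    have h3 : ContinuousAt (fun p : ℝ × ℝ => (p.1 : ℂ) + p.2 * I) p := by fun_prop
    exact (ContinuousAt.comp (f := fun p : ℝ × ℝ => (p.1 : ℂ) + p.2 * I) (x := p) (g := GG i k θ) (GG_cont i k h1 h2 (mem_slit hp.1.1 hp.2.1)) h3).continuousWithinAt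
  obtain ⟨C2, h2'⟩ := hcomp.exists_bound_of_continuousOn hco
  refine ⟨C + 2 * |C2|, by positivity, fun b y hb hb1 hy => ?_⟩
  have hi : 0 < (1 + y ^ 2)⁻¹ := by positivity
  rcases le_total 1 y with hy1 | hy1
  · refine (h b y hb hb1 hy1).trans ?_
    gcongr
    have := abs_nonneg C2; linarith
  · have h3 := h2' (b, y) ⟨⟨hb, hb1⟩, ⟨hy, hy1⟩⟩
    have h4 : (1/2 : ℝ) ≤ (1 + y ^ 2)⁻¹ := by
      rw [one_div]; apply inv_anti₀ (by positivity); nlinarith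
    have h5 := le_abs_self C2
    have h6 := abs_nonneg C2
    simp only at h3
    nlinarith
end

noncomputable section
open Complex (I)
open MeasureTheory Filter Topology Asymptotics

theorem norm_exp_strip (x b y : ℝ) : ‖Complex.exp (-x * ((b : ℂ) + y * I))‖ = Real.exp (-x * b) := by
  rw [Complex.norm_exp]; congr 1; simp

theorem cauchy_shift {G : ℂ → ℂ} {C : ℝ} (hC : 0 < C)
    (hc : ∀ b y : ℝ, 0 ≤ b → 0 ≤ y → ContinuousAt G (b + y * I))
    (hd : ∀ b y : ℝ, 0 < b → 0 < y → DifferentiableAt ℂ G (b + y * I))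
    (hB : ∀ b y : ℝ, 0 ≤ b → b ≤ 1 → 0 ≤ y → ‖G (b + y * I)‖ ≤ C * (1 + y ^ 2)⁻¹) {x : ℝ} (hx : 0 < x) :
    |(∫ y in Set.Ioi (0:ℝ), Complex.exp (-x * (y * I)) * G (y * I)).re| ≤
      Real.exp (-x) * (C * ∫ y : ℝ in Set.Ioi 0, (1 + y ^ 2)⁻¹) + |∫ b in (0:ℝ)..1, Real.exp (-x * b) * (G b).im| := by
  set F : ℂ → ℂ := fun v => Complex.exp (-x * v) * G v with hF
  have hFc : ∀ b y : ℝ, 0 ≤ b → 0 ≤ y → ContinuousAt F (b + y * I) := by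
    intro b y h1 h2
    have := hc b y h1 h2
    exact ContinuousAt.mul (by fun_prop) this
  have hFd : ∀ b y : ℝ, 0 < b → 0 < y → DifferentiableAt ℂ F (b + y * I) := by
    intro b y h1 h2
    exact DifferentiableAt.mul (by fun_prop) (hd b y h1 h2)
  have hFb : ∀ b y : ℝ, 0 ≤ b → b ≤ 1 → 0 ≤ y → ‖F (b + y * I)‖ ≤ Real.exp (-x * b) * (C * (1 + y ^ 2)⁻¹) := by
    intro b y h1 h2 h3
    rw [hF]; simp only
    rw [norm_mul, norm_exp_strip]
    gcongr
    exact hB b y h1 h2 h3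
  have hFb' : ∀ b y : ℝ, 0 ≤ b → b ≤ 1 → 0 ≤ y → ‖F (b + y * I)‖ ≤ C * (1 + y ^ 2)⁻¹ := by
    intro b y h1 h2 h3
    refine (hFb b y h1 h2 h3).trans ?_
    have : Real.exp (-x * b) ≤ 1 := Real.exp_le_one_iff.2 (by nlinarith)
    exact mul_le_of_le_one_left (by positivity) this
  have hI : IntegrableOn (fun y : ℝ => C * (1 + y ^ 2)⁻¹) (Set.Ioi 0) :=
    (integrable_inv_one_add_sq.const_mul C).integrableOn
  have hint : ∀ b : ℝ, 0 ≤ b → b ≤ 1 → IntegrableOn (fun y : ℝ => F (b + y * I)) (Set.Ioi 0) := by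
    intro b h1 h2
    refine hI.mono' ?_ ?_
    · refine ContinuousOn.aestronglyMeasurable (fun y hy => ?_) measurableSet_Ioi
      exact (ContinuousAt.comp (f := fun y : ℝ => (b : ℂ) + y * I) (g := F) (hFc b y h1 (le_of_lt hy)) (by fun_prop)).continuousWithinAt
    · refine (ae_restrict_mem measurableSet_Ioi).mono fun y hy => hFb' b y h1 h2 (le_of_lt hy)
  have hrect : ∀ N : ℝ, 0 < N → (∫ b in (0:ℝ)..1, F (b + (0:ℝ) * I)) - (∫ b in (0:ℝ)..1, F (b + N * I))
      + I • (∫ y in (0:ℝ)..N, F ((1:ℝ) + y * I)) - I • (∫ y in (0:ℝ)..N, F ((0:ℝ) + y * I)) = 0 := by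
    intro N hN
    have := Complex.integral_boundary_rect_eq_zero_of_continuousOn_of_differentiableOn F 0 (1 + N * I) ?_ ?_
    · simpa using this
    · intro v hv
      simp [Complex.mem_reProdIm, Set.uIcc_of_le, hN.le] at hv
      have := (hFc v.re v.im hv.1.1 hv.2.1).continuousWithinAt (s := (Set.uIcc (0:ℂ).re (1 + N * I : ℂ).re ×ℂ Set.uIcc (0:ℂ).im (1 + N * I : ℂ).im))
      rwa [Complex.re_add_im] at this
    · intro v hv
      simp [Complex.mem_reProdIm, hN.le] at hv
      have := (hFd v.re v.im hv.1.1 hv.2.1)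
      rw [Complex.re_add_im] at this
      exact this.differentiableWithinAt
  have t1 := intervalIntegral_tendsto_integral_Ioi 0 (hint 1 zero_le_one le_rfl) tendsto_id
  have t0 := intervalIntegral_tendsto_integral_Ioi 0 (hint 0 le_rfl zero_le_one) tendsto_id
  have tN : Tendsto (fun N : ℝ => ∫ b in (0:ℝ)..1, F (b + N * I)) atTop (𝓝 0) := by
    refine squeeze_zero_norm' (a := fun N : ℝ => C * (1 + N ^ 2)⁻¹) ?_ ?_
    · filter_upwards [eventually_ge_atTop 0] with N hN
      have := intervalIntegral.norm_integral_le_of_norm_le_const (a := (0:ℝ)) (b := 1) (f := fun b : ℝ => F (b + N * I)) (C := C * (1 + N ^ 2)⁻¹) ?_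
      · simpa using this
      · intro b hb
        rw [Set.uIoc_of_le zero_le_one] at hb
        exact hFb' b N hb.1.le hb.2 hN
    · have : Tendsto (fun N : ℝ => 1 + N ^ 2) atTop atTop :=
        tendsto_atTop_add_const_left _ _ (tendsto_pow_atTop (by norm_num))
      simpa using (tendsto_inv_atTop_zero.comp this).const_mul C
  have tt := ((tN.const_sub (∫ b in (0:ℝ)..1, F (b + (0:ℝ) * I))).add (t1.const_smul I)).sub (t0.const_smul I)
  have h0 := tendsto_nhds_unique (tt.congr' ((eventually_gt_atTop 0).mono fun N hN => hrect N hN)) tendsto_const_nhds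
  have key : (∫ y in Set.Ioi (0:ℝ), F (y * I)) = (∫ y in Set.Ioi (0:ℝ), F ((1:ℝ) + y * I)) - I * ∫ b in (0:ℝ)..1, F b := by
    simp only [Complex.ofReal_zero, zero_mul, add_zero, zero_add, sub_zero, smul_eq_mul] at h0
    have h3 : I * (I * ∫ y in Set.Ioi (0:ℝ), F (y * I)) = I * (∫ b in (0:ℝ)..1, F b) + I * (I * (∫ y in Set.Ioi (0:ℝ), F ((1:ℝ) + y * I))) := by
      linear_combination -I * h0
    simp only [← mul_assoc, Complex.I_mul_I] at h3
    linear_combination -h3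
  have e1 : ‖∫ y in Set.Ioi (0:ℝ), F ((1:ℝ) + y * I)‖ ≤ Real.exp (-x) * (C * ∫ y : ℝ in Set.Ioi 0, (1 + y ^ 2)⁻¹) := by
    rw [← integral_const_mul, ← integral_const_mul]
    refine norm_integral_le_of_norm_le (hI.const_mul _) ?_
    refine (ae_restrict_mem measurableSet_Ioi).mono fun y hy => ?_
    simpa using hFb 1 y zero_le_one le_rfl (le_of_lt hy)
  have hFi : IntervalIntegrable (fun b : ℝ => F b) volume 0 1 := by
    refine ContinuousOn.intervalIntegrable fun b hb => ?_
    rw [Set.uIcc_of_le zero_le_one] at hb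
    have := hFc b 0 hb.1 le_rfl
    simp at this
    exact (ContinuousAt.comp (f := fun b : ℝ => (b : ℂ)) (g := F) this (by fun_prop)).continuousWithinAt
  have e2 : (∫ b in (0:ℝ)..1, F b).im = ∫ b in (0:ℝ)..1, Real.exp (-x * b) * (G b).im := by
    have := Complex.imCLM.intervalIntegral_comp_comm hFi
    rw [Complex.imCLM_apply] at this
    rw [← this]
    refine intervalIntegral.integral_congr fun b _ => ?_
    simp only [hF, Complex.imCLM_apply]
    rw [← Complex.ofReal_neg, ← Complex.ofReal_mul, ← Complex.ofReal_exp, Complex.im_ofReal_mul]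
  change |(∫ y in Set.Ioi (0:ℝ), F (y * I)).re| ≤ _
  rw [key, Complex.sub_re, Complex.I_mul_re, e2, sub_neg_eq_add]
  refine (abs_add_le _ _).trans ?_
  gcongr
  exact (Complex.abs_re_le_norm _).trans e1
end

noncomputable section
open Complex (I)
open MeasureTheory Filter Topology Asymptotics

/-- log weight -/
def Ti (i : Fin 4) (q : ℝ) : ℝ := if i = 2 then TT q else 1
/-- log weight at infinity -/
def Li (i : Fin 4) (x : ℝ) : ℝ := if i = 2 then Real.log x else 1

theorem Ti_one (i : Fin 4) (q : ℝ) : 1 ≤ Ti i q := by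
  unfold Ti; split_ifs
  · exact TT_one q
  · exact le_rfl

theorem gint {a r : ℝ} (ha : 0 < a) (hr : 0 < r) :
    IntegrableOn (fun t : ℝ => t ^ (a - 1) * Real.exp (-(r * t))) (Set.Ioi 0) := by
  by_contra h
  have h1 := integral_undef h
  rw [Real.integral_rpow_mul_exp_neg_mul_Ioi ha hr] at h1
  have := Real.Gamma_pos_of_pos ha
  have : 0 < (1 / r) ^ a * Real.Gamma a := by positivity
  linarith

theorem TT_split {x b : ℝ} (hx : 1 ≤ x) (hb : 0 < b) :
    TT b ≤ (1 + Real.log x) + 2 * (x ^ (1/2:ℝ) * b ^ (1/2:ℝ) + x ^ (-(1/2:ℝ)) * b ^ (-(1/2:ℝ))) := by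
  have hx0 : 0 < x := by linarith
  have hu : 0 < x * b := by positivity
  have h1 : Real.log (x * b) ≤ 2 * (x * b) ^ (1/2:ℝ) := by
    have := Real.log_le_rpow_div hu.le (show (0:ℝ) < 1/2 by norm_num)
    linarith
  have h2 : -Real.log (x * b) ≤ 2 * (x * b) ^ (-(1/2:ℝ)) := by
    have := Real.log_le_rpow_div (inv_pos.2 hu).le (show (0:ℝ) < 1/2 by norm_num)
    rw [Real.log_inv, Real.inv_rpow hu.le, ← Real.rpow_neg hu.le] at this
    linarith
  have h3 : 0 < (x * b) ^ (1/2:ℝ) := by positivity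
  have h4 : 0 < (x * b) ^ (-(1/2:ℝ)) := by positivity
  rw [← Real.mul_rpow hx0.le hb.le, ← Real.mul_rpow hx0.le hb.le]
  have h5 := Real.log_nonneg hx
  have h6 := Real.log_mul hx0.ne' hb.ne'
  unfold TT
  have : |Real.log b| ≤ Real.log x + 2 * ((x * b) ^ (1/2:ℝ) + (x * b) ^ (-(1/2:ℝ))) := by
    rw [abs_le]; constructor <;> linarith
  linarith

theorem lap_bd (i : Fin 4) {a : ℝ} (ha : 0 < a) : ∃ C > (0:ℝ), ∀ (D : ℝ) (h : ℝ → ℝ), 0 ≤ D →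
    (∀ b ∈ Set.Ioc (0:ℝ) 1, |h b| ≤ D * (b ^ a * Ti i b)) → ∀ x : ℝ, Real.exp 1 ≤ x →
    |∫ b in (0:ℝ)..1, Real.exp (-x * b) * h b| ≤ D * C * (x ^ (-(a + 1)) * Li i x) := by
  have g1 := Real.Gamma_pos_of_pos (show 0 < a + 1 by linarith)
  have g2 := Real.Gamma_pos_of_pos (show 0 < a + 3/2 by linarith)
  have g3 := Real.Gamma_pos_of_pos (show 0 < a + 1/2 by linarith)
  refine ⟨2 * Real.Gamma (a+1) + 2 * Real.Gamma (a + 3/2) + 2 * Real.Gamma (a + 1/2), by positivity,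
    fun D h hD hh x hx => ?_⟩
  have hx1 : 1 ≤ x := by have := Real.add_one_le_exp 1; linarith
  have hx0 : 0 < x := by linarith
  have hl1 : 1 ≤ Real.log x := by rwa [Real.le_log_iff_exp_le hx0]
  set e1 : ℝ → ℝ := fun t : ℝ => t ^ ((a + 1) - 1) * Real.exp (-(x * t)) with he1
  set e2 : ℝ → ℝ := fun t : ℝ => t ^ ((a + 3/2) - 1) * Real.exp (-(x * t)) with he2
  set e3 : ℝ → ℝ := fun t : ℝ => t ^ ((a + 1/2) - 1) * Real.exp (-(x * t)) with he3
  have i1 : IntegrableOn e1 (Set.Ioi 0) := gint (by linarith) hx0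
  have i2 : IntegrableOn e2 (Set.Ioi 0) := gint (by linarith) hx0
  have i3 : IntegrableOn e3 (Set.Ioi 0) := gint (by linarith) hx0
  have v1 : ∫ t in Set.Ioi (0:ℝ), e1 t = x ^ (-(a+1)) * Real.Gamma (a+1) := by
    rw [he1, Real.integral_rpow_mul_exp_neg_mul_Ioi (by linarith) hx0, one_div, Real.inv_rpow hx0.le, Real.rpow_neg hx0.le]
  have v2 : ∫ t in Set.Ioi (0:ℝ), e2 t = x ^ (-(a+3/2)) * Real.Gamma (a+3/2) := by
    rw [he2, Real.integral_rpow_mul_exp_neg_mul_Ioi (by linarith) hx0, one_div, Real.inv_rpow hx0.le, Real.rpow_neg hx0.le]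
  have v3 : ∫ t in Set.Ioi (0:ℝ), e3 t = x ^ (-(a+1/2)) * Real.Gamma (a+1/2) := by
    rw [he3, Real.integral_rpow_mul_exp_neg_mul_Ioi (by linarith) hx0, one_div, Real.inv_rpow hx0.le, Real.rpow_neg hx0.le]
  have gen : ∀ g : ℝ → ℝ, IntegrableOn g (Set.Ioi 0) → (∀ t ∈ Set.Ioi (0:ℝ), 0 ≤ g t) →
      (∀ b ∈ Set.Ioc (0:ℝ) 1, b ^ a * Ti i b * Real.exp (-(x * b)) ≤ g b) →
      |∫ b in (0:ℝ)..1, Real.exp (-x * b) * h b| ≤ D * ∫ t in Set.Ioi (0:ℝ), g t := by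
    intro g hg hg0 hgb
    rw [intervalIntegral.integral_of_le zero_le_one, ← Real.norm_eq_abs]
    have hs : Set.Ioc (0:ℝ) 1 ⊆ Set.Ioi 0 := fun b hb => hb.1
    have s1 : ‖∫ b in Set.Ioc (0:ℝ) 1, Real.exp (-x * b) * h b‖ ≤ ∫ b in Set.Ioc (0:ℝ) 1, D * g b := by
      refine norm_integral_le_of_norm_le ((hg.mono_set hs).const_mul D) ?_
      refine (ae_restrict_mem measurableSet_Ioc).mono fun b hb => ?_
      rw [norm_mul, Real.norm_eq_abs, Real.norm_eq_abs, abs_of_pos (Real.exp_pos _), neg_mul]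
      calc _ ≤ Real.exp (-(x * b)) * (D * (b ^ a * Ti i b)) := by gcongr; exact hh b hb
        _ = D * (b ^ a * Ti i b * Real.exp (-(x * b))) := by ring
        _ ≤ _ := by gcongr; exact hgb b hb
    refine s1.trans ?_
    rw [integral_const_mul]
    refine mul_le_mul_of_nonneg_left ?_ hD
    exact setIntegral_mono_set hg ((ae_restrict_mem measurableSet_Ioi).mono hg0) hs.eventuallyLE
  have hxp : 0 < x ^ (-(a+1)) := by positivity
  by_cases hi : i = 2
  · have r := gen (fun t => (1 + Real.log x) * e1 t + ((2 * x ^ (1/2:ℝ)) * e2 t + (2 * x ^ (-(1/2:ℝ))) * e3 t))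
      ((i1.const_mul _).add ((i2.const_mul _).add (i3.const_mul _))) ?_ ?_
    · have j23 : IntegrableOn (fun t => (2 * x ^ (1/2:ℝ)) * e2 t + (2 * x ^ (-(1/2:ℝ))) * e3 t) (Set.Ioi 0) :=
        (i2.const_mul _).add (i3.const_mul _)
      rw [integral_add (i1.const_mul _) j23, integral_add (i2.const_mul _) (i3.const_mul _),
        integral_const_mul, integral_const_mul, integral_const_mul, v1, v2, v3] at r
      refine r.trans ?_
      have w2 : x ^ (-(a+1)) = x ^ (1/2:ℝ) * x ^ (-(a+3/2)) := by
        rw [← Real.rpow_add hx0]; congr 1; ring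
      have w3 : x ^ (-(a+1)) = x ^ (-(1/2:ℝ)) * x ^ (-(a+1/2)) := by
        rw [← Real.rpow_add hx0]; congr 1; ring
      rw [Li, if_pos hi, mul_assoc D]
      refine mul_le_mul_of_nonneg_left ?_ hD
      have : (1 + Real.log x) * (x ^ (-(a + 1)) * Real.Gamma (a + 1)) +
        (2 * x ^ (1 / 2:ℝ) * (x ^ (-(a + 3 / 2)) * Real.Gamma (a + 3 / 2)) +
          2 * x ^ (-(1 / 2:ℝ)) * (x ^ (-(a + 1 / 2)) * Real.Gamma (a + 1 / 2)))
          = x ^ (-(a+1)) * ((1 + Real.log x) * Real.Gamma (a+1) + 2 * Real.Gamma (a+3/2) + 2 * Real.Gamma (a+1/2)) := by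
        linear_combination (-2 * Real.Gamma (a+3/2)) * w2 - 2 * Real.Gamma (a+1/2) * w3
      rw [this]
      have q1 : Real.Gamma (a+1) * 1 ≤ Real.Gamma (a+1) * Real.log x := by gcongr
      have q2 : Real.Gamma (a+3/2) * 1 ≤ Real.Gamma (a+3/2) * Real.log x := by gcongr
      have q3 : Real.Gamma (a+1/2) * 1 ≤ Real.Gamma (a+1/2) * Real.log x := by gcongr
      calc _ ≤ x ^ (-(a+1)) * ((2 * Real.Gamma (a+1) + 2 * Real.Gamma (a + 3/2) + 2 * Real.Gamma (a + 1/2)) * Real.log x) := by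
            gcongr; linarith
        _ = _ := by ring
    · intro t ht
      have ht : 0 < t := ht
      simp only [he1, he2, he3]; positivity
    · intro b hb
      have hb0 := hb.1
      have := TT_split hx1 hb0
      rw [Ti, if_pos hi]
      simp only [he1, he2, he3]
      rw [show a + 1 - 1 = a by ring, show a + 3/2 - 1 = a + 1/2 by ring, show a + 1/2 - 1 = a + -(1/2) by ring,
        Real.rpow_add hb0, Real.rpow_add hb0]
      calc b ^ a * TT b * Real.exp (-(x * b)) ≤ b ^ a * ((1 + Real.log x) + 2 * (x ^ (1/2:ℝ) * b ^ (1/2:ℝ) + x ^ (-(1/2:ℝ)) * b ^ (-(1/2:ℝ)))) * Real.exp (-(x * b)) := by gcongr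
        _ = _ := by ring
  · have r := gen e1 i1 ?_ ?_
    · rw [v1] at r
      refine r.trans ?_
      rw [Li, if_neg hi, mul_one, mul_assoc, mul_comm (x ^ _)]
      gcongr
      linarith
    · intro t ht
      have ht : 0 < t := ht
      simp only [he1]; positivity
    · intro b hb
      rw [Ti, if_neg hi]
      simp only [he1, add_sub_cancel_right, mul_one]
      exact le_rfl

theorem im_exp_bd (B : ℂ) : |(Complex.exp B).im| ≤ ‖B‖ * Real.exp ‖B‖ := by
  have := Complex.norm_exp_sub_sum_le_norm_mul_exp B 1
  simp at this
  have h2 := (Complex.abs_im_le_norm _).trans this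
  simpa using h2

theorem GG_im (i : Fin 4) (k : ℕ) {θ : Fin 4 → ℝ} (h1 : 0 < θ 1) (h2 : θ 2 ∈ Set.Ioo (0:ℝ) 2) :
    ∃ D > (0:ℝ), ∀ b ∈ Set.Ioc (0:ℝ) 1, |(GG i k θ b).im| ≤ D * (b ^ (k + θ 2) * Ti i b) := by
  obtain ⟨K, hK⟩ := Bd_ev h1 h2
  have hB := hK.self_of_nhds
  have hK1 := hB.one
  set m := min (θ 2 / 2) 1 with hm
  have hm0 : 0 < m := by have := h2.1; positivity
  have hm2 : m ≤ θ 2 := (min_le_left _ _).trans (by linarith [h2.1])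
  set E := 1000 * K ^ 6 * (2 * (1 + 4 / m) ^ 2 * 2) with hE
  have hE0 : 0 < E := by positivity
  set Q := K * K * K * K with hQ
  have hQ0 : 0 < Q := by positivity
  refine ⟨Real.exp E * (E * (Q * Real.exp Q) + Real.exp Q * (100 * K ^ 6)), by positivity, fun b hb => ?_⟩
  have hb0 := hb.1
  have hv : (b : ℂ) ≠ 0 := by exact_mod_cast hb0.ne'
  have hnb : ‖(b : ℂ)‖ = b := by simp [abs_of_pos hb0]
  have hT := Ti_one i b
  have hq : 1000 * K ^ 6 * (‖(b : ℂ)‖ * (TT ‖(b : ℂ)‖ ^ 2 * PP (θ 2) ‖(b : ℂ)‖)) ≤ E := by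
    rw [hnb, hE]
    refine mul_le_mul_of_nonneg_left ?_ (by positivity)
    refine (qTP_bd hm0 (min_le_right _ _) hm2 h2.2.le hb0).trans ?_
    have : b ^ (m/2) ≤ 1 := Real.rpow_le_one hb0.le hb.2 (by positivity)
    have : b ^ 4 ≤ 1 := pow_le_one₀ hb0.le hb.2
    refine mul_le_mul_of_nonneg_left (by linarith) (by positivity)
  have bA := (AA_bd hB hv).trans hq
  have bdA := (dA_bd hB i hv).trans hq
  have bB := BB_bd0 hB hv
  have bdB := dB_bd0 hB i hv
  rw [hnb] at bB bdB
  have hba : 0 < b ^ θ 2 := Real.rpow_pos_of_pos hb0 _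
  have hba1 : b ^ θ 2 ≤ 1 := Real.rpow_le_one hb0.le hb.2 h2.1.le
  have bB1 : ‖BB θ b‖ ≤ Q := bB.trans (mul_le_of_le_one_right hQ0.le hba1)
  have rA : AA θ b = ((AA θ b).re : ℂ) := Complex.ext (by simp) (by simp [AA_real hb0])
  have rdA : dA i θ b = ((dA i θ b).re : ℂ) := Complex.ext (by simp) (by simp [dA_real i h1 h2 hb0])
  have eq : (GG i k θ b).im = b ^ k * (Real.exp (AA θ b).re * ((dA i θ b).re * (Complex.exp (BB θ b)).im + (Complex.exp (BB θ b) * dB i θ b).im)) := by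
    have : GG i k θ b = ((b ^ k * Real.exp (AA θ b).re : ℝ) : ℂ) * ((((dA i θ b).re : ℝ) : ℂ) * Complex.exp (BB θ b) + Complex.exp (BB θ b) * dB i θ b) := by
      rw [GG, Psi, dPsi, Complex.exp_add]
      push_cast
      rw [← rA, ← rdA]
      ring
    rw [this, Complex.im_ofReal_mul, Complex.add_im, Complex.im_ofReal_mul]
    ring
  rw [eq, abs_mul, abs_mul, abs_of_pos (Real.exp_pos _), abs_of_pos (by positivity : 0 < b ^ k)]
  have y1 : Real.exp (AA θ b).re ≤ Real.exp E := Real.exp_le_exp.2 ((Complex.re_le_norm _).trans bA)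
  have y2 : |(dA i θ b).re| ≤ E := (Complex.abs_re_le_norm _).trans bdA
  have y3 : |(Complex.exp (BB θ b)).im| ≤ Q * b ^ θ 2 * Real.exp Q :=
    (im_exp_bd _).trans (by gcongr)
  have y4 : ‖Complex.exp (BB θ b)‖ ≤ Real.exp Q := by
    rw [Complex.norm_exp]; exact Real.exp_le_exp.2 ((Complex.re_le_norm _).trans bB1)
  have y5 : |(Complex.exp (BB θ b) * dB i θ b).im| ≤ Real.exp Q * (100 * K ^ 6 * (b ^ θ 2 * Ti i b)) := by
    refine (Complex.abs_im_le_norm _).trans ?_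
    rw [norm_mul]
    gcongr
    exact bdB
  have y6 : |(dA i θ b).re * (Complex.exp (BB θ b)).im + (Complex.exp (BB θ b) * dB i θ b).im|
      ≤ E * (Q * b ^ θ 2 * Real.exp Q) + Real.exp Q * (100 * K ^ 6 * (b ^ θ 2 * Ti i b)) := by
    refine (abs_add_le _ _).trans ?_
    rw [abs_mul]
    gcongr
  calc _ ≤ b ^ k * (Real.exp E * (E * (Q * b ^ θ 2 * Real.exp Q) + Real.exp Q * (100 * K ^ 6 * (b ^ θ 2 * Ti i b)))) := by gcongr
    _ ≤ b ^ k * (Real.exp E * (E * (Q * b ^ θ 2 * Real.exp Q) * Ti i b + Real.exp Q * (100 * K ^ 6 * (b ^ θ 2 * Ti i b)))) := by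
      refine mul_le_mul_of_nonneg_left (mul_le_mul_of_nonneg_left (add_le_add ?_ le_rfl) (by positivity)) (by positivity)
      exact le_mul_of_one_le_right (by positivity) hT
    _ = _ := by
      rw [Real.rpow_add hb0, Real.rpow_natCast]; ring

theorem tail_pos (i : Fin 4) (k : ℕ) (hk : k ≤ 1) {θ : Fin 4 → ℝ} (h1 : 0 < θ 1) (h2 : θ 2 ∈ Set.Ioo (0:ℝ) 2) :
    ∃ C > (0:ℝ), ∀ᶠ x : ℝ in atTop, |(∫ y in Set.Ioi (0:ℝ), Complex.exp (-x * (y * I)) * GG i k θ (y * I)).re| ≤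
      C * (x ^ (-((k + θ 2) + 1)) * Li i x) := by
  obtain ⟨C, hC, hB⟩ := GG_strip i k hk h1 h2
  obtain ⟨D, hD, hI⟩ := GG_im i k h1 h2
  have ha : 0 < k + θ 2 := by have := h2.1; positivity
  obtain ⟨C2, hC2, hL⟩ := lap_bd i ha
  set J := ∫ y : ℝ in Set.Ioi 0, (1 + y ^ 2)⁻¹ with hJ
  have hJ0 : 0 ≤ J := setIntegral_nonneg measurableSet_Ioi (fun y _ => by positivity)
  have hlo := isLittleO_exp_neg_mul_rpow_atTop (zero_lt_one) (-((k + θ 2) + 1))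
  refine ⟨C * J + D * C2, by positivity, ?_⟩
  filter_upwards [hlo.bound zero_lt_one, eventually_ge_atTop (Real.exp 1)] with x hx hx1
  have hx0 : 0 < x := (Real.exp_pos 1).trans_le hx1
  have hl1 : 1 ≤ Real.log x := by rwa [Real.le_log_iff_exp_le hx0]
  have hLi : 1 ≤ Li i x := by unfold Li; split_ifs; exacts [hl1, le_rfl]
  have hp : 0 < x ^ (-((k + θ 2) + 1)) := by positivity
  rw [Real.norm_eq_abs, Real.norm_eq_abs, abs_of_pos hp, abs_of_pos (Real.exp_pos _), one_mul, neg_one_mul] at hx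
  have s1 := cauchy_shift (G := GG i k θ) hC (fun b y hb hy => GG_cont i k h1 h2 (mem_slit hb hy))
    (fun b y hb hy => GG_diff i k h1 (by
      rw [Complex.mem_slitPlane_iff]; left; simpa using hb)) hB hx0
  have s2 := hL D (fun b => (GG i k θ b).im) hD.le hI x hx1
  refine s1.trans ?_
  calc _ ≤ x ^ (-((k + θ 2) + 1)) * Li i x * (C * J) + D * C2 * (x ^ (-((k + θ 2) + 1)) * Li i x) := by
        gcongr
        exact hx.trans (le_mul_of_one_le_right hp.le hLi)
    _ = _ := by ring
end

noncomputable section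
open Complex (I)
open MeasureTheory Filter Topology Asymptotics

def HH (k : ℕ) (θ : Fin 4 → ℝ) (x : ℝ) : ℂ :=
  ∫ y in Set.Ioi (0:ℝ), Complex.exp (-x * (y * I)) * ((y * I) ^ k * Complex.exp (Psi θ (y * I)))
def II (i : Fin 4) (k : ℕ) (θ : Fin 4 → ℝ) (x : ℝ) : ℂ :=
  ∫ y in Set.Ioi (0:ℝ), Complex.exp (-x * (y * I)) * GG i k θ (y * I)

theorem norm_exp_iy (x y : ℝ) : ‖Complex.exp (-x * (y * I))‖ = 1 := by
  rw [Complex.norm_exp]; simp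

theorem yI_slit {y : ℝ} (hy : 0 < y) : (y * I : ℂ) ∈ Complex.slitPlane := by
  rw [Complex.mem_slitPlane_iff]; right; simp; exact hy.ne'

theorem good_ev {θ₀ : Fin 4 → ℝ} (h1 : 0 < θ₀ 1) (h2 : θ₀ 2 ∈ Set.Ioo (0:ℝ) 2) :
    ∀ᶠ θ in 𝓝 θ₀, θ₀ 1 / 2 ≤ θ 1 ∧ θ₀ 2 / 2 ≤ θ 2 ∧ 0 < θ 1 ∧ θ 2 ∈ Set.Ioo (0:ℝ) 2 := by
  have c1 : ContinuousAt (fun θ : Fin 4 → ℝ => θ 1) θ₀ := (continuous_apply 1).continuousAt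
  have c2 : ContinuousAt (fun θ : Fin 4 → ℝ => θ 2) θ₀ := (continuous_apply 2).continuousAt
  have := h2.1
  filter_upwards [c1.eventually (lt_mem_nhds (show θ₀ 1 / 2 < θ₀ 1 by linarith)),
    c2.eventually (lt_mem_nhds (show θ₀ 2 / 2 < θ₀ 2 by linarith)),
    c2.eventually (gt_mem_nhds h2.2)] with θ a b c
  exact ⟨a.le, b.le, by linarith, by linarith, c⟩

theorem expPsi_unif {θ₀ : Fin 4 → ℝ} (h1 : 0 < θ₀ 1) (h2 : θ₀ 2 ∈ Set.Ioo (0:ℝ) 2) :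
    ∃ C > (0:ℝ), ∀ᶠ θ in 𝓝 θ₀, ∀ y : ℝ, 0 < y → ‖Complex.exp (Psi θ (y * I))‖ * (1 + y) ^ 7 ≤ C := by
  set s := θ₀ 1 / 2 with hs
  set m := θ₀ 2 / 2 with hm
  have hs0 : 0 < s := by positivity
  have hm0 : 0 < m := by have := h2.1; positivity
  obtain ⟨K, hK, hd⟩ := decay (C := 0) hm0 (Real.rpow_pos_of_pos hs0 m)
  refine ⟨128 + 128 * (Real.exp 1 * K), by positivity, ?_⟩
  filter_upwards [good_ev h1 h2] with θ ⟨g1, g2, g3, g4⟩ y hy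
  rw [Complex.norm_exp, Psi_re g3 g4 hy]
  rcases le_total y 1 with hy1 | hy1
  · have e1 : Real.exp (-(θ 1 * y) ^ θ 2) ≤ 1 := Real.exp_le_one_iff.2 (by
      have := Real.rpow_nonneg (mul_pos g3 hy).le (θ 2); linarith)
    have e2 : (1 + y) ^ 7 ≤ 2 ^ 7 := by gcongr; linarith
    have e3 : 0 ≤ Real.exp 1 * K := by positivity
    have e4 := mul_le_mul e1 e2 (by positivity) zero_le_one
    linarith
  · have hsy : 0 < s * y := by positivity
    have e0 : (s * y) ^ m - 1 ≤ (θ 1 * y) ^ θ 2 := by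
      have a1 : (s * y) ^ θ 2 ≤ (θ 1 * y) ^ θ 2 := by
        have := g4.1
        gcongr
      rcases le_total 1 (s * y) with h | h
      · have := Real.rpow_le_rpow_of_exponent_le h g2
        linarith
      · have := Real.rpow_le_one hsy.le h hm0.le
        have := Real.rpow_nonneg hsy.le (θ 2)
        linarith
    rw [Real.mul_rpow hs0.le hy.le] at e0
    have hd := hd y hy1
    rw [zero_mul, add_zero] at hd
    have e1 : Real.exp (-(θ 1 * y) ^ θ 2) ≤ Real.exp 1 * Real.exp (-(s ^ m * y ^ m)) := by
      rw [← Real.exp_add]; apply Real.exp_le_exp.2; linarith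
    have e2 : (1 + y) ^ 7 ≤ 128 * y ^ 8 := by
      have a1 : (1 + y) ^ 7 ≤ (2 * y) ^ 7 := by gcongr; linarith
      have a2 : y ^ 7 ≤ y ^ 8 := pow_le_pow_right₀ hy1 (by norm_num)
      nlinarith
    calc _ ≤ Real.exp 1 * Real.exp (-(s ^ m * y ^ m)) * (128 * y ^ 8) := by gcongr
      _ = 128 * (Real.exp 1 * (y ^ 8 * Real.exp (-(s ^ m * y ^ m)))) := by ring
      _ ≤ 128 * (Real.exp 1 * K) := by gcongr
      _ ≤ _ := by linarith

theorem HH_dom (k : ℕ) (hk : k ≤ 1) {θ₀ : Fin 4 → ℝ} (h1 : 0 < θ₀ 1) (h2 : θ₀ 2 ∈ Set.Ioo (0:ℝ) 2) :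
    ∃ C > (0:ℝ), ∀ᶠ θ in 𝓝 θ₀, ∀ x y : ℝ, 0 < y →
      ‖Complex.exp (-x * (y * I)) * ((y * I) ^ k * Complex.exp (Psi θ (y * I)))‖ ≤ C * (1 + y ^ 2)⁻¹ := by
  obtain ⟨C, hC, h⟩ := expPsi_unif h1 h2
  refine ⟨C, hC, ?_⟩
  filter_upwards [h] with θ hθ x y hy
  have := hθ y hy
  rw [norm_mul, norm_exp_iy, one_mul, norm_mul, norm_pow, norm_mul, Complex.norm_I, Complex.norm_real, mul_one,
    Real.norm_eq_abs, abs_of_pos hy, ← div_eq_mul_inv, le_div_iff₀ (by positivity)]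
  refine le_trans ?_ this
  rw [mul_comm (y ^ k), mul_assoc]
  gcongr
  have a1 : y ^ k ≤ 1 + y := by
    interval_cases k <;> simp <;> linarith
  have a2 : 1 + y ^ 2 ≤ (1 + y) ^ 6 := by
    calc 1 + y ^ 2 ≤ (1 + y) ^ 2 := by nlinarith
      _ ≤ _ := pow_le_pow_right₀ (by linarith) (by norm_num)
  calc _ ≤ (1 + y) * (1 + y) ^ 6 := by gcongr
    _ = _ := by ring

theorem GG_dom (i : Fin 4) (k : ℕ) (hk : k ≤ 1) {θ₀ : Fin 4 → ℝ} (h1 : 0 < θ₀ 1) (h2 : θ₀ 2 ∈ Set.Ioo (0:ℝ) 2) :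
    ∃ C > (0:ℝ), ∀ᶠ θ in 𝓝 θ₀, ∀ x y : ℝ, 0 < y →
      ‖Complex.exp (-x * (y * I)) * GG i k θ (y * I)‖ ≤ C * (1 + y ^ 2)⁻¹ := by
  obtain ⟨C, hC, h⟩ := expPsi_unif h1 h2
  obtain ⟨C', hC', m, hm, hm1, h'⟩ := dPsi_unif i h1 h2
  refine ⟨2 * C' * C, by positivity, ?_⟩
  filter_upwards [h, h'] with θ hθ hθ' x y hy
  have := hθ y hy
  have hp := hθ' (y * I)
  have hn : ‖(y * I : ℂ)‖ = y := by simp [abs_of_pos hy]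
  rw [hn] at hp
  rw [norm_mul, norm_exp_iy, one_mul, GG, norm_mul, norm_mul, norm_pow, hn, ← div_eq_mul_inv, le_div_iff₀ (by positivity)]
  have a1 : y ^ k ≤ 1 + y := by
    interval_cases k <;> simp <;> linarith
  have a2 : 1 + y ^ 2 ≤ (1 + y) ^ 2 := by nlinarith
  have a3 : y ^ (m/2) ≤ (1 + y) ^ 4 := by
    calc y ^ (m/2) ≤ (1 + y) ^ (m/2) := by gcongr; linarith
      _ ≤ (1 + y) ^ (4:ℝ) := Real.rpow_le_rpow_of_exponent_le (by linarith) (by linarith)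
      _ = _ := by norm_cast
  have a4 : y ^ 4 ≤ (1 + y) ^ 4 := by gcongr; linarith
  have a5 : ‖dPsi i θ (y * I)‖ ≤ C' * (2 * (1 + y) ^ 4) := hp.trans (by gcongr; linarith)
  calc _ ≤ (1 + y) * (‖Complex.exp (Psi θ (y * I))‖ * (C' * (2 * (1 + y) ^ 4))) * (1 + y) ^ 2 := by gcongr
    _ = 2 * C' * (‖Complex.exp (Psi θ (y * I))‖ * (1 + y) ^ 7) := by ring
    _ ≤ _ := by gcongr

theorem dom_int (C : ℝ) : Integrable (fun y : ℝ => C * (1 + y ^ 2)⁻¹) (volume.restrict (Set.Ioi 0)) :=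
  (integrable_inv_one_add_sq.const_mul C).restrict

theorem HH_meas (k : ℕ) {θ : Fin 4 → ℝ} (h1 : 0 < θ 1) (x : ℝ) :
    AEStronglyMeasurable (fun y : ℝ => Complex.exp (-x * (y * I)) * ((y * I) ^ k * Complex.exp (Psi θ (y * I)))) (volume.restrict (Set.Ioi 0)) := by
  refine ContinuousOn.aestronglyMeasurable (fun y hy => ?_) measurableSet_Ioi
  have h3 : ContinuousAt (fun y : ℝ => Psi θ (y * I)) y :=
    ContinuousAt.comp (f := fun y : ℝ => (y * I : ℂ)) (g := Psi θ) (Psi_vderiv h1 (yI_slit hy)).continuousAt (by fun_prop)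
  have : ContinuousAt (fun y : ℝ => Complex.exp (-x * (y * I)) * ((y * I) ^ k * Complex.exp (Psi θ (y * I)))) y := by
    fun_prop
  exact this.continuousWithinAt

theorem II_meas (i : Fin 4) (k : ℕ) {θ : Fin 4 → ℝ} (h1 : 0 < θ 1) (x : ℝ) :
    AEStronglyMeasurable (fun y : ℝ => Complex.exp (-x * (y * I)) * GG i k θ (y * I)) (volume.restrict (Set.Ioi 0)) := by
  refine ContinuousOn.aestronglyMeasurable (fun y hy => ?_) measurableSet_Ioi
  have h3 : ContinuousAt (fun y : ℝ => GG i k θ (y * I)) y :=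
    ContinuousAt.comp (f := fun y : ℝ => (y * I : ℂ)) (g := GG i k θ) (GG_diff i k h1 (yI_slit hy)).continuousAt (by fun_prop)
  have : ContinuousAt (fun y : ℝ => Complex.exp (-x * (y * I)) * GG i k θ (y * I)) y := by
    fun_prop
  exact this.continuousWithinAt

theorem HH_int (k : ℕ) (hk : k ≤ 1) {θ : Fin 4 → ℝ} (h1 : 0 < θ 1) (h2 : θ 2 ∈ Set.Ioo (0:ℝ) 2) (x : ℝ) :
    Integrable (fun y : ℝ => Complex.exp (-x * (y * I)) * ((y * I) ^ k * Complex.exp (Psi θ (y * I)))) (volume.restrict (Set.Ioi 0)) := by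
  obtain ⟨C, _, h⟩ := HH_dom k hk h1 h2
  refine (dom_int C).mono' (HH_meas k h1 x) ?_
  exact (ae_restrict_mem measurableSet_Ioi).mono fun y hy => h.self_of_nhds x y hy

theorem II_int (i : Fin 4) (k : ℕ) (hk : k ≤ 1) {θ : Fin 4 → ℝ} (h1 : 0 < θ 1) (h2 : θ 2 ∈ Set.Ioo (0:ℝ) 2) (x : ℝ) :
    Integrable (fun y : ℝ => Complex.exp (-x * (y * I)) * GG i k θ (y * I)) (volume.restrict (Set.Ioi 0)) := by
  obtain ⟨C, _, h⟩ := GG_dom i k hk h1 h2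
  refine (dom_int C).mono' (II_meas i k h1 x) ?_
  exact (ae_restrict_mem measurableSet_Ioi).mono fun y hy => h.self_of_nhds x y hy

theorem upd_tendsto (θ : Fin 4 → ℝ) (i : Fin 4) : Tendsto (fun s => Function.update θ i s) (𝓝 (θ i)) (𝓝 θ) := by
  have h : Continuous (fun s => Function.update θ i s) := continuous_const.update i continuous_id
  have := h.tendsto (θ i)
  rwa [Function.update_eq_self] at this

theorem Psi_pderiv (i : Fin 4) {θ : Fin 4 → ℝ} (s : ℝ) (h1 : 0 < Function.update θ i s 1)
    (h2 : Function.update θ i s 2 ∈ Set.Ioo (0:ℝ) 2) (v : ℂ) :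
    HasDerivAt (fun s => Psi (Function.update θ i s) v) (dPsi i (Function.update θ i s) v) s := by
  have a := (AA_deriv i h1 h2 v).add (BB_deriv i h1 v)
  simp only [Function.update_idem, Function.update_self] at a
  exact a

theorem HH_deriv (i : Fin 4) (k : ℕ) (hk : k ≤ 1) {θ : Fin 4 → ℝ} (h1 : 0 < θ 1) (h2 : θ 2 ∈ Set.Ioo (0:ℝ) 2) (x : ℝ) :
    HasDerivAt (fun s => HH k (Function.update θ i s) x) (II i k θ x) (θ i) := by
  obtain ⟨C, hC, hG⟩ := GG_dom i k hk h1 h2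
  have ev := (upd_tendsto θ i).eventually (hG.and (good_ev h1 h2))
  have r := hasDerivAt_integral_of_dominated_loc_of_deriv_le (μ := volume.restrict (Set.Ioi (0:ℝ)))
    (F := fun s (y : ℝ) => Complex.exp (-x * (y * I)) * ((y * I) ^ k * Complex.exp (Psi (Function.update θ i s) (y * I))))
    (F' := fun s (y : ℝ) => Complex.exp (-x * (y * I)) * GG i k (Function.update θ i s) (y * I))
    (bound := fun y => C * (1 + y ^ 2)⁻¹) ev ?_ ?_ ?_ ?_ (dom_int C) ?_
  · have := r.2
    simp only [Function.update_eq_self] at this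
    exact this
  · exact ev.mono fun s hs => HH_meas k hs.2.2.2.1 x
  · simp only [Function.update_eq_self]
    exact HH_int k hk h1 h2 x
  · simp only [Function.update_eq_self]
    exact II_meas i k h1 x
  · exact (ae_restrict_mem measurableSet_Ioi).mono fun y hy s hs => hs.1 x y hy
  · refine Eventually.of_forall fun y s hs => ?_
    have a := (((Psi_pderiv i s hs.2.2.2.1 hs.2.2.2.2 (y * I)).cexp).const_mul ((y * I : ℂ) ^ k)).const_mul (Complex.exp (-x * (y * I)))
    exact a

theorem II_xderiv (i : Fin 4) {θ : Fin 4 → ℝ} (h1 : 0 < θ 1) (h2 : θ 2 ∈ Set.Ioo (0:ℝ) 2) (x : ℝ) :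
    HasDerivAt (fun x => II i 0 θ x) (-(II i 1 θ x)) x := by
  obtain ⟨C, hC, hG⟩ := GG_dom i 1 le_rfl h1 h2
  have hG := hG.self_of_nhds
  have r := hasDerivAt_integral_of_dominated_loc_of_deriv_le (μ := volume.restrict (Set.Ioi (0:ℝ)))
    (F := fun (x : ℝ) (y : ℝ) => Complex.exp (-x * (y * I)) * GG i 0 θ (y * I))
    (F' := fun (x : ℝ) (y : ℝ) => -(Complex.exp (-x * (y * I)) * GG i 1 θ (y * I)))
    (x₀ := x)
    (bound := fun y => C * (1 + y ^ 2)⁻¹) univ_mem ?_ ?_ ?_ ?_ (dom_int C) ?_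
  · have := r.2
    rw [integral_neg] at this
    exact this
  · exact Eventually.of_forall fun s => II_meas i 0 h1 s
  · exact II_int i 0 zero_le_one h1 h2 x
  · exact (II_meas i 1 h1 x).neg
  · exact (ae_restrict_mem measurableSet_Ioi).mono fun y hy s _ => by
      rw [norm_neg]; exact hG s y hy
  · refine Eventually.of_forall fun y s _ => ?_
    have a : HasDerivAt (fun s : ℝ => -(s : ℂ) * (y * I)) (-1 * (y * I)) s :=
      ((Complex.ofRealCLM.hasDerivAt (x := s)).neg).mul_const _
    have b := a.cexp.mul_const (GG i 0 θ (y * I))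
    refine b.congr_deriv ?_
    simp only [GG]; ring

theorem psiM_neg (θ : Fin 4 → ℝ) (t : ℝ) : psiM θ (-t) = (starRingEnd ℂ) (psiM θ t) := by
  have hs : Real.sign (-t) = -Real.sign t := by
    rcases lt_trichotomy t 0 with h | h | h
    · rw [Real.sign_of_neg h, Real.sign_of_pos (by linarith)]; ring
    · simp [h]
    · rw [Real.sign_of_pos h, Real.sign_of_neg (by linarith)]
  unfold psiM
  split_ifs with h
  · simp only [mul_neg, abs_neg, map_add, map_sub, map_mul, Complex.conj_ofReal, Complex.conj_I]
    push_cast; ring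
  · simp only [mul_neg, abs_neg, map_add, map_mul, map_one, Complex.conj_ofReal, Complex.conj_I, hs]
    push_cast; ring

theorem fM_link {θ : Fin 4 → ℝ} (h1 : 0 < θ 1) (h2 : θ 2 ∈ Set.Ioo (0:ℝ) 2) (x : ℝ) :
    fM θ x = (1 / Real.pi) * (HH 0 θ x).re := by
  set f : ℝ → ℂ := fun t => Complex.exp (-I * (t : ℂ) * (x : ℂ)) * phiM θ t with hf
  have hneg : ∀ t, f (-t) = (starRingEnd ℂ) (f t) := by
    intro t
    simp only [hf, phiM, psiM_neg, map_mul, ← Complex.exp_conj, map_neg, Complex.conj_ofReal, Complex.conj_I]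
    push_cast
    ring_nf
  have hpos : ∀ y : ℝ, y ∈ Set.Ioi (0:ℝ) → Complex.exp (-x * (y * I)) * ((y * I) ^ 0 * Complex.exp (Psi θ (y * I))) = f y := by
    intro y hy
    simp only [hf, phiM, pow_zero, one_mul, psi_link h1 h2 hy, Psi]
    ring_nf
  have hi : IntegrableOn f (Set.Ioi 0) :=
    (integrable_congr ((ae_restrict_mem measurableSet_Ioi).mono hpos)).1 (HH_int 0 zero_le_one h1 h2 x)
  have hi2 : IntegrableOn f (Set.Iio 0) := by
    have h3 : IntegrableOn (fun t => (starRingEnd ℂ) (f t)) (Set.Ioi (-0)) := by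
      rw [neg_zero]
      exact Complex.conjCLE.toContinuousLinearMap.integrable_comp hi
    have h4 := h3.comp_neg_Iio
    simpa [hneg] using h4
  have hI : Integrable f := by
    rw [← integrableOn_univ, ← Set.Iio_union_Ici (a := (0:ℝ))]
    exact hi2.union ((integrableOn_Ici_iff_integrableOn_Ioi (by simp)).2 hi)
  have e1 : (∫ t, f t).re = ∫ t, (f t).re := (Complex.reCLM.integral_comp_comm hI).symm
  have e2 : (∫ t in Set.Ioi (0:ℝ), f t).re = ∫ t in Set.Ioi (0:ℝ), (f t).re := (Complex.reCLM.integral_comp_comm hi).symm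
  have e3 : ∀ t, (f t).re = (f |t|).re := by
    intro t
    rcases abs_choice t with h | h
    · rw [h]
    · rw [h, hneg, Complex.conj_re]
  have e4 : ∫ t, (f t).re = 2 * ∫ t in Set.Ioi (0:ℝ), (f t).re := by
    rw [← integral_comp_abs (f := fun t => (f t).re)]
    exact integral_congr_ae (Eventually.of_forall e3)
  have e5 : HH 0 θ x = ∫ t in Set.Ioi (0:ℝ), f t := setIntegral_congr_fun measurableSet_Ioi hpos
  rw [fM, e5, e2]
  change _ * (∫ t, f t).re = _
  rw [e1, e4]
  field_simp

theorem fP_link (i : Fin 4) {θ : Fin 4 → ℝ} (h1 : 0 < θ 1) (h2 : θ 2 ∈ Set.Ioo (0:ℝ) 2) (x : ℝ) :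
    fP i θ x = (1 / Real.pi) * (II i 0 θ x).re := by
  have ev := (upd_tendsto θ i).eventually (good_ev h1 h2)
  have h : HasDerivAt (fun s => (HH 0 (Function.update θ i s) x).re) (II i 0 θ x).re (θ i) :=
    Complex.reCLM.hasFDerivAt.comp_hasDerivAt (θ i) (HH_deriv i 0 zero_le_one h1 h2 x)
  refine HasDerivAt.deriv ((h.const_mul (1 / Real.pi)).congr_of_eventuallyEq ?_)
  exact ev.mono fun s hs => fM_link hs.2.2.1 hs.2.2.2 x

theorem II_zero (θ : Fin 4 → ℝ) (x : ℝ) : II 0 0 θ x = HH 1 θ x := by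
  unfold II HH
  congr 1
  ext y
  simp [GG, dPsi, dA, dB]
  ring

theorem fPP_link (i : Fin 4) {θ : Fin 4 → ℝ} (h1 : 0 < θ 1) (h2 : θ 2 ∈ Set.Ioo (0:ℝ) 2) (x : ℝ) :
    fPP 0 i θ x = (1 / Real.pi) * (II i 1 θ x).re := by
  have ev := (upd_tendsto θ i).eventually (good_ev h1 h2)
  have h : HasDerivAt (fun s => (HH 1 (Function.update θ i s) x).re) (II i 1 θ x).re (θ i) :=
    Complex.reCLM.hasFDerivAt.comp_hasDerivAt (θ i) (HH_deriv i 1 le_rfl h1 h2 x)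
  refine HasDerivAt.deriv ((h.const_mul (1 / Real.pi)).congr_of_eventuallyEq ?_)
  exact ev.mono fun s hs => by
    simp only
    rw [fP_link 0 hs.2.2.1 hs.2.2.2 x, II_zero]

theorem fPX_link (i : Fin 4) {θ : Fin 4 → ℝ} (h1 : 0 < θ 1) (h2 : θ 2 ∈ Set.Ioo (0:ℝ) 2) (x : ℝ) :
    fPX i θ x = -((1 / Real.pi) * (II i 1 θ x).re) := by
  have h : HasDerivAt (fun x => (II i 0 θ x).re) (-(II i 1 θ x)).re x :=
    Complex.reCLM.hasFDerivAt.comp_hasDerivAt x (II_xderiv i h1 h2 x)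
  have h3 : (fun y => fP i θ y) = fun y => (1 / Real.pi) * (II i 0 θ y).re := funext fun y => fP_link i h1 h2 y
  rw [fPX, h3, (h.const_mul (1 / Real.pi)).deriv, Complex.neg_re]
  ring

def Rf (θ : Fin 4 → ℝ) : Fin 4 → ℝ := ![-θ 0, θ 1, θ 2, -θ 3]
def eps (i : Fin 4) : ℝ := ![-1, 1, 1, -1] i

theorem eps_abs (i : Fin 4) : |eps i| = 1 := by fin_cases i <;> simp [eps]
theorem Rf_apply (θ : Fin 4 → ℝ) (i : Fin 4) : Rf θ i = eps i * θ i := by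
  fin_cases i <;> simp [eps, Rf]
theorem Rf_upd (θ : Fin 4 → ℝ) (i : Fin 4) (s : ℝ) : Rf (Function.update θ i s) = Function.update (Rf θ) i (eps i * s) := by
  ext j
  by_cases h : j = i
  · subst h; rw [Rf_apply]; simp
  · rw [Rf_apply, Function.update_of_ne h, Function.update_of_ne h, Rf_apply]

theorem psiM_Rf (θ : Fin 4 → ℝ) (t : ℝ) : psiM (Rf θ) t = psiM θ (-t) := by
  rw [psiM_neg]
  have r0 : Rf θ 0 = -θ 0 := rfl
  have r1 : Rf θ 1 = θ 1 := rfl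
  have r2 : Rf θ 2 = θ 2 := rfl
  have r3 : Rf θ 3 = -θ 3 := rfl
  unfold psiM
  by_cases h : θ 2 = 1
  · have h' : Rf θ 2 = 1 := h
    rw [if_pos h', if_pos h, r0, r1, r3]
    simp only [map_add, map_sub, map_mul, Complex.conj_ofReal, Complex.conj_I]
    push_cast; ring
  · have h' : ¬ Rf θ 2 = 1 := h
    rw [if_neg h', if_neg h, r0, r1, r2, r3]
    simp only [map_add, map_mul, map_one, Complex.conj_ofReal, Complex.conj_I]
    push_cast; ring

theorem fM_Rf (θ : Fin 4 → ℝ) (x : ℝ) : fM θ x = fM (Rf θ) (-x) := by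
  unfold fM
  congr 2
  rw [← integral_neg_eq_self]
  congr 1
  ext t
  rw [phiM, phiM, psiM_Rf]
  push_cast
  ring_nf

theorem fP_Rf (i : Fin 4) (θ : Fin 4 → ℝ) (x : ℝ) : fP i θ x = eps i * fP i (Rf θ) (-x) := by
  unfold fP
  have : (fun s => fM (Function.update θ i s) x) = fun s => (fun u => fM (Function.update (Rf θ) i u) (-x)) (eps i * s) := by
    ext s; rw [fM_Rf, Rf_upd]
  rw [this, deriv_comp_mul_left (eps i) (fun u => fM (Function.update (Rf θ) i u) (-x)), smul_eq_mul, Rf_apply]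

theorem fPX_Rf (i : Fin 4) (θ : Fin 4 → ℝ) (x : ℝ) : fPX i θ x = -(eps i * fPX i (Rf θ) (-x)) := by
  unfold fPX
  have : (fun y => fP i θ y) = fun y => eps i * (fun u => fP i (Rf θ) u) (-y) := by
    ext s; rw [fP_Rf]
  rw [this, deriv_const_mul_field, deriv_comp_neg, mul_neg]

theorem two_sided {h g r : ℝ → ℝ} {C1 C2 : ℝ} (hC1 : 0 < C1) (hC2 : 0 < C2) (hr : ∀ x, 1 ≤ x → 0 ≤ r x)
    (hg : ∀ x, |h x| = |g (-x)|)
    (b1 : ∀ᶠ x in atTop, |h x| ≤ C1 * r x) (b2 : ∀ᶠ x in atTop, |g x| ≤ C2 * r x) :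
    IsBigOAtInfty h (fun x => r |x|) := by
  obtain ⟨M1, h1⟩ := eventually_atTop.1 b1
  obtain ⟨M2, h2⟩ := eventually_atTop.1 b2
  refine ⟨C1 + C2, by positivity, max 1 (max M1 M2), by positivity, fun x hx => ?_⟩
  have a1 := (le_max_left _ _).trans hx
  have a2 := ((le_max_left _ _).trans (le_max_right _ _)).trans hx
  have a3 := ((le_max_right _ _).trans (le_max_right _ _)).trans hx
  have hr0 := hr _ a1
  rcases abs_choice x with h | h
  · have := h1 _ a2
    rw [h] at this hr0
    simp only [h]
    nlinarith
  · have := h2 _ a3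
    rw [h] at this hr0
    simp only [h]
    rw [hg]
    nlinarith

theorem tail_all (i : Fin 4) {θ : Fin 4 → ℝ} (h1 : 0 < θ 1) (h2 : θ 2 ∈ Set.Ioo (0:ℝ) 2) :
    IsBigOAtInfty (fP i θ) (fun x => |x| ^ (-(1 + θ 2)) * Li i |x|) ∧
    IsBigOAtInfty (fPX i θ) (fun x => |x| ^ (-(2 + θ 2)) * Li i |x|) := by
  have hpi := Real.pi_pos
  have k1 : 0 < Rf θ 1 := h1
  have k2 : Rf θ 2 ∈ Set.Ioo (0:ℝ) 2 := h2
  have k3 : Rf θ 2 = θ 2 := rfl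
  have hL : ∀ x, 1 ≤ x → 0 ≤ Li i x := fun x hx => by
    unfold Li; split_ifs; exacts [Real.log_nonneg hx, zero_le_one]
  have P0 : ∀ θ : Fin 4 → ℝ, 0 < θ 1 → θ 2 ∈ Set.Ioo (0:ℝ) 2 → ∃ C > (0:ℝ), ∀ᶠ x in atTop, |fP i θ x| ≤ C * (x ^ (-(1 + θ 2)) * Li i x) := by
    intro θ h1 h2
    obtain ⟨C, hC, h⟩ := tail_pos i 0 zero_le_one h1 h2
    refine ⟨1 / Real.pi * C, by positivity, h.mono fun x hx => ?_⟩
    rw [fP_link i h1 h2, abs_mul, abs_of_pos (by positivity : 0 < 1 / Real.pi), mul_assoc]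
    refine mul_le_mul_of_nonneg_left (hx.trans (le_of_eq ?_)) (by positivity)
    push_cast; ring_nf
  have P1 : ∀ θ : Fin 4 → ℝ, 0 < θ 1 → θ 2 ∈ Set.Ioo (0:ℝ) 2 → ∃ C > (0:ℝ), ∀ᶠ x in atTop, |fPX i θ x| ≤ C * (x ^ (-(2 + θ 2)) * Li i x) := by
    intro θ h1 h2
    obtain ⟨C, hC, h⟩ := tail_pos i 1 le_rfl h1 h2
    refine ⟨1 / Real.pi * C, by positivity, h.mono fun x hx => ?_⟩
    rw [fPX_link i h1 h2, abs_neg, abs_mul, abs_of_pos (by positivity : 0 < 1 / Real.pi), mul_assoc]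
    refine mul_le_mul_of_nonneg_left (hx.trans (le_of_eq ?_)) (by positivity)
    push_cast; ring_nf
  constructor
  · obtain ⟨C1, hC1, b1⟩ := P0 θ h1 h2
    obtain ⟨C2, hC2, b2⟩ := P0 (Rf θ) k1 k2
    rw [k3] at b2
    exact two_sided (r := fun x => x ^ (-(1 + θ 2)) * Li i x) hC1 hC2
      (fun x hx => mul_nonneg (Real.rpow_nonneg (by linarith) _) (hL x hx))
      (fun x => by rw [fP_Rf, abs_mul, eps_abs, one_mul]) b1 b2
  · obtain ⟨C1, hC1, b1⟩ := P1 θ h1 h2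
    obtain ⟨C2, hC2, b2⟩ := P1 (Rf θ) k1 k2
    rw [k3] at b2
    exact two_sided (r := fun x => x ^ (-(2 + θ 2)) * Li i x) hC1 hC2
      (fun x hx => mul_nonneg (Real.rpow_nonneg (by linarith) _) (hL x hx))
      (fun x => by rw [fPX_Rf, abs_neg, abs_mul, eps_abs, one_mul]) b1 b2
end

/-- Tail behavior of the first-order parameter derivatives of the density:
`f_σ = O(|x|^{-(1+α)})`, `f_α = O(|x|^{-(1+α)} log|x|)`, `f_β = O(|x|^{-(1+α)})`,
`f_σ' = -f_{μσ} = O(|x|^{-(2+α)})`, `f_α' = -f_{μα} = O(|x|^{-(2+α)} log|x|)`,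
`f_β' = -f_{μβ} = O(|x|^{-(2+α)})`. -/
theorem density_first_deriv_tail_bounds (θ : Fin 4 → ℝ) (hθ : θ ∈ ThetaInt) :
    IsBigOAtInfty (fP 1 θ) (fun x => |x| ^ (-(1 + θ 2))) ∧
    IsBigOAtInfty (fP 2 θ) (fun x => |x| ^ (-(1 + θ 2)) * Real.log |x|) ∧
    IsBigOAtInfty (fP 3 θ) (fun x => |x| ^ (-(1 + θ 2))) ∧
    ((∀ x : ℝ, fPX 1 θ x = -fPP 0 1 θ x) ∧
      IsBigOAtInfty (fPX 1 θ) (fun x => |x| ^ (-(2 + θ 2)))) ∧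
    ((∀ x : ℝ, fPX 2 θ x = -fPP 0 2 θ x) ∧
      IsBigOAtInfty (fPX 2 θ) (fun x => |x| ^ (-(2 + θ 2)) * Real.log |x|)) ∧
    ((∀ x : ℝ, fPX 3 θ x = -fPP 0 3 θ x) ∧
      IsBigOAtInfty (fPX 3 θ) (fun x => |x| ^ (-(2 + θ 2)))) := by
  obtain ⟨h1, h2, _⟩ := hθ
  have a1 := tail_all 1 h1 h2
  have a2 := tail_all 2 h1 h2
  have a3 := tail_all 3 h1 h2
  have l1 : ∀ x, Li 1 x = 1 := fun x => if_neg (by decide)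
  have l2 : ∀ x, Li 2 x = Real.log x := fun x => if_pos rfl
  have l3 : ∀ x, Li 3 x = 1 := fun x => if_neg (by decide)
  simp only [l1, mul_one] at a1
  simp only [l2] at a2
  simp only [l3, mul_one] at a3
  have e : ∀ i x, fPX i θ x = -fPP 0 i θ x := fun i x => by
    rw [fPX_link i h1 h2, fPP_link i h1 h2]
  exact ⟨a1.1, a2.1, a3.1, ⟨e 1, a1.2⟩, ⟨e 2, a2.2⟩, ⟨e 3, a3.2⟩⟩
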